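/- arXiv:2002.07785 — 16 statements merged into one kernel-verified Lean document; each statement's English description precedes it below -/
import Mathlib

section
/- There exist differentiable functions p, b, a : ℝ → ℂ with |p(t)| < 1 for all t that solve the truncated Szegő L(1) system i p' = (N − (1−|p|²)E)p + a·conj(b), i b' = (N+E)b + E·a·conj(p), i a' = (N−E)a − E|p|²·b·p (with N and E evaluated pointwise as N = |b|² + (1−|p|²)E, E = |bp+a|²/(1−|p|²)²), together with a constant ω > 0, such that, setting α_0(t) = b(t) and α_n(t) = (b(t)p(t)+a(t))·p(t)^{n−1} for n ≥ 1, for every real s > 1/2 one has lim_{t→∞} (1/t)·log( Σ_{n=0}^∞ (1+n)^{2s} |α_n(t)|² ) = (2s−1)ω. In particular the H^s Sobolev norms of this solution grow exponentially for every s > 1/2. -/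
open Filter Topology ComplexConjugate

/-- The quantity `E` on the invariant manifold `L(1)`:
`E = |bp+a|² / (1-|p|²)²`, evaluated pointwise in time. -/
noncomputable def Etr (p b a : ℝ → ℂ) (t : ℝ) : ℝ :=
  ‖b t * p t + a t‖ ^ 2 / (1 - ‖p t‖ ^ 2) ^ 2

/-- The quantity `N` on the invariant manifold `L(1)`:
`N = |b|² + (1-|p|²) E`, evaluated pointwise in time. -/
noncomputable def Ntr (p b a : ℝ → ℂ) (t : ℝ) : ℝ :=
  ‖b t‖ ^ 2 + (1 - ‖p t‖ ^ 2) * Etr p b a t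

set_option maxHeartbeats 2000000 in
lemma sz_sum_bounds (s : ℝ) (hs : 1 / 2 < s) : ∃ K₁ K₂ : ℝ, 0 < K₁ ∧ 0 < K₂ ∧ ∀ q : ℝ, 0 < q → q ≤ 1 →
    Summable (fun m : ℕ => ((2 : ℝ) + m) ^ (2 * s) * (1 - q) ^ m) ∧
    K₁ * q ^ (-(2 * s) - 1) ≤ ∑' m : ℕ, ((2 : ℝ) + m) ^ (2 * s) * (1 - q) ^ m ∧
    ∑' m : ℕ, ((2 : ℝ) + m) ^ (2 * s) * (1 - q) ^ m ≤ K₂ * q ^ (-(2 * s) - 1) := by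
  have hs0 : 0 < s := by linarith
  refine ⟨(2 : ℝ) ^ (-(2 * s)) * (1 / 2), (4 * s) ^ (2 * s) * Real.exp 1 * 4, by positivity,
    by positivity, ?_⟩
  intro q hq hq1
  have hr : 0 ≤ 1 - q := by linarith
  have hqpow : q ^ (-(2 * s) - 1) = q ^ (-(2 * s)) * q⁻¹ := by
    rw [Real.rpow_sub hq, Real.rpow_one, div_eq_mul_inv]
  -- termwise upper bound
  have hterm : ∀ m : ℕ, ((2 : ℝ) + m) ^ (2 * s) * (1 - q) ^ m ≤
      ((4 * s) ^ (2 * s) * q ^ (-(2 * s)) * Real.exp 1) * (Real.exp (-(q / 2))) ^ m := by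
    intro m
    have hm : (0 : ℝ) < 2 + m := by positivity
    have h1 : (1 - q) ^ m ≤ (Real.exp (-q)) ^ m := by
      gcongr
      have := Real.add_one_le_exp (-q)
      linarith
    have h2 : (2 + (m : ℝ)) ^ (2 * s) ≤
        (4 * s) ^ (2 * s) * q ^ (-(2 * s)) * Real.exp (q * (2 + m) / 2) := by
      have h3 : 2 + (m : ℝ) ≤ (4 * s) * q⁻¹ * Real.exp (q * (2 + m) / (4 * s)) := by
        have := Real.add_one_le_exp (q * (2 + m) / (4 * s))
        calc 2 + (m : ℝ) = (4 * s) * q⁻¹ * (q * (2 + m) / (4 * s)) := by field_simp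
          _ ≤ _ := by gcongr; linarith
      calc (2 + (m : ℝ)) ^ (2 * s) ≤ ((4 * s) * q⁻¹ * Real.exp (q * (2 + m) / (4 * s))) ^ (2 * s) := by
            gcongr
        _ = _ := by
            rw [Real.mul_rpow (by positivity) (by positivity), Real.mul_rpow (by positivity) (by positivity),
              Real.inv_rpow hq.le, Real.rpow_neg hq.le, ← Real.exp_mul]
            congr 2
            field_simp
            ring
    calc ((2 : ℝ) + m) ^ (2 * s) * (1 - q) ^ m
        ≤ ((4 * s) ^ (2 * s) * q ^ (-(2 * s)) * Real.exp (q * (2 + m) / 2)) * (Real.exp (-q)) ^ m := by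
          gcongr
      _ = ((4 * s) ^ (2 * s) * q ^ (-(2 * s)) * Real.exp q) * (Real.exp (-(q / 2))) ^ m := by
          rw [← Real.exp_nat_mul, ← Real.exp_nat_mul, mul_assoc, mul_assoc _ (Real.exp q),
            ← Real.exp_add, ← Real.exp_add]
          congr 2
          ring
      _ ≤ _ := by gcongr
  have hE0 : 0 ≤ Real.exp (-(q / 2)) := (Real.exp_pos _).le
  have hE1 : Real.exp (-(q / 2)) < 1 := by
    rw [Real.exp_lt_one_iff]; linarith
  have hgs := (summable_geometric_of_lt_one hE0 hE1).mul_left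
    ((4 * s) ^ (2 * s) * q ^ (-(2 * s)) * Real.exp 1)
  have hsum : Summable (fun m : ℕ => ((2 : ℝ) + m) ^ (2 * s) * (1 - q) ^ m) :=
    Summable.of_nonneg_of_le (fun m => by positivity) hterm hgs
  refine ⟨hsum, ?_, ?_⟩
  · set M := ⌊1 / (2 * q)⌋₊ with hM
    have hM1 : (M : ℝ) ≤ 1 / (2 * q) := Nat.floor_le (by positivity)
    have hM2 : 1 / (2 * q) < M + 1 := Nat.lt_floor_add_one _
    have hMq : M * q ≤ 1 / 2 := by
      calc M * q ≤ 1 / (2 * q) * q := by gcongr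
        _ = 1 / 2 := by field_simp
    have hB : 1 / 2 ≤ (1 - q) ^ M := by
      have := one_add_mul_le_pow (show (-2 : ℝ) ≤ -q by linarith) M
      rw [← sub_eq_add_neg] at this
      linarith
    have hr1 : 1 - q < 1 := by linarith
    have hg := (summable_geometric_of_lt_one hr hr1).mul_left
      ((1 / (2 * q)) ^ (2 * s) * (1 - q) ^ M)
    have h5 : ∑' m : ℕ, ((1 / (2 * q)) ^ (2 * s) * (1 - q) ^ M) * (1 - q) ^ m ≤
        ∑' m : ℕ, ((2 : ℝ) + (m + M : ℕ)) ^ (2 * s) * (1 - q) ^ (m + M) := by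
      refine hg.tsum_le_tsum ?_ ((summable_nat_add_iff M).2 hsum)
      intro m
      have : 1 / (2 * q) ≤ (2 : ℝ) + (m + M : ℕ) := by
        push_cast
        have : (0 : ℝ) ≤ m := by positivity
        linarith
      rw [mul_assoc, ← pow_add, add_comm M m]
      gcongr
    have h6 := hsum.sum_add_tsum_nat_add M
    have h7 : 0 ≤ ∑ m ∈ Finset.range M, ((2 : ℝ) + m) ^ (2 * s) * (1 - q) ^ m :=
      Finset.sum_nonneg fun m _ => by positivity
    rw [tsum_mul_left, tsum_geometric_of_lt_one hr hr1] at h5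
    calc _ = (1 / (2 * q)) ^ (2 * s) * (1 / 2) * (1 - (1 - q))⁻¹ := by
          rw [hqpow, one_div (2 * q), Real.inv_rpow (by positivity), Real.mul_rpow (by positivity) hq.le,
            Real.rpow_neg hq.le, Real.rpow_neg (by positivity), mul_inv]
          ring_nf
      _ ≤ (1 / (2 * q)) ^ (2 * s) * (1 - q) ^ M * (1 - (1 - q))⁻¹ := by
          have : 0 ≤ (1 - (1 - q))⁻¹ := by rw [sub_sub_cancel]; positivity
          gcongr
      _ ≤ _ := by linarith
  · have h8 := hsum.tsum_le_tsum hterm hgs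
    rw [tsum_mul_left, tsum_geometric_of_lt_one hE0 hE1] at h8
    have h9 : (1 - Real.exp (-(q / 2)))⁻¹ ≤ 4 * q⁻¹ := by
      have h10 : Real.exp (-(q / 2)) ≤ 1 - q / 4 := by
        rw [Real.exp_neg]
        have := Real.add_one_le_exp (q / 2)
        calc (Real.exp (q / 2))⁻¹ ≤ (q / 2 + 1)⁻¹ := by gcongr
          _ ≤ 1 - q / 4 := by
            rw [inv_le_iff_one_le_mul₀ (by positivity)]
            nlinarith
      calc (1 - Real.exp (-(q / 2)))⁻¹ ≤ (q / 4)⁻¹ := by gcongr; linarith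
        _ = _ := by field_simp
    calc _ ≤ _ := h8
      _ ≤ ((4 * s) ^ (2 * s) * q ^ (-(2 * s)) * Real.exp 1) * (4 * q⁻¹) := by gcongr
      _ = _ := by rw [hqpow]; ring

lemma sz_real_ode : ∃ σ τ Θ : ℝ → ℝ, (∀ t, HasDerivAt σ (τ t * (1 - σ t ^ 2)) t) ∧
    (∀ t, HasDerivAt τ (7 / 16 * σ t * (1 - σ t ^ 2)) t) ∧
    (∀ t, HasDerivAt Θ (1 - σ t ^ 2) t) ∧
    (∀ t, τ t ^ 2 = 1 / 2 + 7 / 16 * σ t ^ 2) ∧ (∀ t, σ t ^ 2 < 1) ∧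
    (∀ t, 0 ≤ t → Real.exp (-(Real.sqrt 15 / 2 * t)) ≤ 1 - σ t ^ 2 ∧
      1 - σ t ^ 2 ≤ 15 / 2 * Real.exp (-(Real.sqrt 15 / 2 * t))) := by
  set μ := Real.sqrt 15 / 4 with hμ
  have hμ2 : μ ^ 2 = 15 / 16 := by rw [hμ, div_pow, Real.sq_sqrt (by norm_num)]; norm_num
  set k := Real.sqrt (8 / 15) with hk
  have hk2 : k ^ 2 = 8 / 15 := by rw [hk, Real.sq_sqrt (by norm_num)]
  let x : ℝ → ℝ := fun t => k * Real.sinh (μ * t)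
  let y : ℝ → ℝ := fun t => k * μ * Real.cosh (μ * t)
  have hlin : ∀ t, HasDerivAt (fun t : ℝ => μ * t) μ t := fun t => by
    simpa using (hasDerivAt_id t).const_mul μ
  have hx : ∀ t, HasDerivAt x (y t) t := fun t => by
    have := ((hlin t).sinh).const_mul k
    exact this.congr_deriv (by simp only [y]; ring)
  have hy : ∀ t, HasDerivAt y (15 / 16 * x t) t := fun t => by
    have := ((hlin t).cosh).const_mul (k * μ)
    exact this.congr_deriv (by simp only [x]; rw [← hμ2]; ring)
  have hxy : ∀ t, y t ^ 2 = 1 / 2 + 15 / 16 * x t ^ 2 := fun t => by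
    simp only [x, y]
    rw [mul_pow, mul_pow, mul_pow, Real.cosh_sq, hμ2, hk2]; ring
  let ρ : ℝ → ℝ := fun t => (Real.sqrt (1 + x t ^ 2))⁻¹
  have hpos : ∀ t, 0 < 1 + x t ^ 2 := fun t => by positivity
  have hρ2 : ∀ t, ρ t ^ 2 = (1 + x t ^ 2)⁻¹ := fun t => by
    simp only [ρ]; rw [inv_pow, Real.sq_sqrt (hpos t).le]
  have hρ2' : ∀ t, ρ t ^ 2 * (1 + x t ^ 2) = 1 := fun t => by
    rw [hρ2, inv_mul_cancel₀ (hpos t).ne']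
  have hρ : ∀ t, HasDerivAt ρ (-(x t * y t * ρ t ^ 3)) t := fun t => by
    have h0 : HasDerivAt (fun t => 1 + x t ^ 2) (2 * x t * y t) t :=
      (((hx t).pow 2).const_add 1).congr_deriv (by simp)
    have h1 := h0.sqrt (hpos t).ne'
    have hne : Real.sqrt (1 + x t ^ 2) ≠ 0 := (Real.sqrt_pos.2 (hpos t)).ne'
    have := h1.inv hne
    refine this.congr_deriv ?_
    simp only [ρ]
    field_simp
    try ring
  have hq : ∀ t, 1 - (x t * ρ t) ^ 2 = ρ t ^ 2 := fun t => by
    linear_combination - hρ2' t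
  have hσ : ∀ t, HasDerivAt (fun t => x t * ρ t) (y t * ρ t * (1 - (x t * ρ t) ^ 2)) t := fun t => by
    have := (hx t).mul (hρ t)
    exact this.congr_deriv (by ring)
  have hτ : ∀ t, HasDerivAt (fun t => y t * ρ t) (7 / 16 * (x t * ρ t) * (1 - (x t * ρ t) ^ 2)) t := fun t => by
    have := (hy t).mul (hρ t)
    refine this.congr_deriv ?_
    rw [hq]
    linear_combination (-15 / 16 * x t * ρ t) * hρ2' t - x t * ρ t ^ 3 * hxy t
  have hcont : Continuous (fun t => 1 - (x t * ρ t) ^ 2) := by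
    have : Continuous (fun t => x t * ρ t) := continuous_iff_continuousAt.2 fun t => (hσ t).continuousAt
    fun_prop
  have hbase : ∀ t, 1 + x t ^ 2 = 11 / 15 + 2 / 15 * (Real.exp (Real.sqrt 15 / 2 * t) + Real.exp (-(Real.sqrt 15 / 2 * t))) := fun t => by
    have e1 : Real.exp (Real.sqrt 15 / 2 * t) = Real.exp (μ * t) ^ 2 := by
      rw [← Real.exp_nat_mul]; congr 1; rw [hμ]; push_cast; ring
    have e2 : Real.exp (-(Real.sqrt 15 / 2 * t)) = Real.exp (-(μ * t)) ^ 2 := by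
      rw [← Real.exp_nat_mul]; congr 1; rw [hμ]; push_cast; ring
    have e3 : Real.exp (μ * t) * Real.exp (-(μ * t)) = 1 := by rw [← Real.exp_add]; simp
    simp only [x]
    rw [e1, e2, mul_pow, hk2, Real.sinh_eq]
    linear_combination (-4/15) * e3
  refine ⟨fun t => x t * ρ t, fun t => y t * ρ t, fun t => ∫ u in (0 : ℝ)..t, (1 - (x u * ρ u) ^ 2),
    hσ, hτ, ?_, ?_, ?_, ?_⟩
  · intro t
    exact intervalIntegral.integral_hasDerivAt_right (hcont.intervalIntegrable _ _)
      (hcont.stronglyMeasurableAtFilter _ _) hcont.continuousAt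
  · intro t
    linear_combination ρ t ^ 2 * hxy t + 1 / 2 * hρ2' t
  · intro t
    have : 0 < ρ t ^ 2 := by rw [hρ2]; exact inv_pos.2 (hpos t)
    have := hq t
    show (x t * ρ t) ^ 2 < 1
    linarith
  · intro t ht
    show _ ≤ 1 - (x t * ρ t) ^ 2 ∧ 1 - (x t * ρ t) ^ 2 ≤ _
    rw [hq, hρ2]
    have hE : 0 < Real.exp (Real.sqrt 15 / 2 * t) := Real.exp_pos _
    have hE1 : 1 ≤ Real.exp (Real.sqrt 15 / 2 * t) := Real.one_le_exp (by positivity)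
    have hb := hbase t
    have hE' : Real.exp (-(Real.sqrt 15 / 2 * t)) ≤ 1 := Real.exp_le_one_iff.2 (by
      have : 0 ≤ Real.sqrt 15 / 2 * t := by positivity
      linarith)
    have hE'' := Real.exp_pos (-(Real.sqrt 15 / 2 * t))
    constructor
    · rw [Real.exp_neg]
      apply inv_anti₀ (hpos t)
      linarith
    · rw [Real.exp_neg]
      calc (1 + x t ^ 2)⁻¹ ≤ (2 / 15 * Real.exp (Real.sqrt 15 / 2 * t))⁻¹ := by
            apply inv_anti₀ (by positivity); linarith
        _ = _ := by rw [mul_inv]; norm_num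

lemma sz_main_ode (σ τ Θ : ℝ → ℝ) (hσ : ∀ t, HasDerivAt σ (τ t * (1 - σ t ^ 2)) t)
    (hτ : ∀ t, HasDerivAt τ (7 / 16 * σ t * (1 - σ t ^ 2)) t)
    (hΘ : ∀ t, HasDerivAt Θ (1 - σ t ^ 2) t)
    (hrel : ∀ t, τ t ^ 2 = 1 / 2 + 7 / 16 * σ t ^ 2) (hlt : ∀ t, σ t ^ 2 < 1) :
    ∃ p b a : ℝ → ℂ, Differentiable ℝ p ∧ Differentiable ℝ b ∧ Differentiable ℝ a ∧
      (∀ t : ℝ,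
        Complex.I * deriv p t =
          ((Ntr p b a t - (1 - ‖p t‖ ^ 2) * Etr p b a t : ℝ) : ℂ) * p t
            + a t * conj (b t) ∧
        Complex.I * deriv b t =
          ((Ntr p b a t + Etr p b a t : ℝ) : ℂ) * b t
            + (Etr p b a t : ℂ) * a t * conj (p t) ∧
        Complex.I * deriv a t =
          ((Ntr p b a t - Etr p b a t : ℝ) : ℂ) * a t
            - ((Etr p b a t * ‖p t‖ ^ 2 : ℝ) : ℂ) * b t * p t) ∧
      (∀ t, ‖p t‖ ^ 2 = σ t ^ 2) ∧ (∀ t, ‖b t‖ ^ 2 = 1 / 2 + σ t ^ 2) ∧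
      (∀ t, ‖b t * p t + a t‖ ^ 2 = (1 - σ t ^ 2) ^ 2) := by
  let P : ℝ → ℂ := fun t => Complex.exp (((3 / 4 * Θ t : ℝ) : ℂ) * Complex.I)
  let F : ℝ → ℂ := fun t => Complex.exp (((-3 / 2 * t - 1 / 4 * Θ t : ℝ) : ℂ) * Complex.I)
  have hP1 : ∀ t, ‖P t‖ = 1 := fun t => Complex.norm_exp_ofReal_mul_I _
  have hF1 : ∀ t, ‖F t‖ = 1 := fun t => Complex.norm_exp_ofReal_mul_I _
  have hPc : ∀ t, P t * conj (P t) = 1 := fun t => by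
    rw [Complex.mul_conj, Complex.normSq_eq_norm_sq, hP1]; simp
  have hFc : ∀ t, F t * conj (F t) = 1 := fun t => by
    rw [Complex.mul_conj, Complex.normSq_eq_norm_sq, hF1]; simp
  have hP : ∀ t, HasDerivAt P (P t * (3 / 4 * (1 - (σ t : ℂ) ^ 2) * Complex.I)) t := fun t => by
    have := ((((hΘ t).const_mul (3 / 4)).ofReal_comp).mul_const Complex.I).cexp
    exact this.congr_deriv (by simp only [P]; push_cast; ring)
  have hF : ∀ t, HasDerivAt F (F t * ((-3 / 2 - 1 / 4 * (1 - (σ t : ℂ) ^ 2)) * Complex.I)) t := fun t => by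
    have := (((((hasDerivAt_id t).const_mul (-3 / 2)).sub ((hΘ t).const_mul (1 / 4))).ofReal_comp).mul_const Complex.I).cexp
    exact this.congr_deriv (by simp [F])
  have hσc := fun t => (hσ t).ofReal_comp
  have hτc := fun t => (hτ t).ofReal_comp
  let p : ℝ → ℂ := fun t => σ t * P t
  let b : ℝ → ℂ := fun t => -(3 / 4 * σ t + τ t * Complex.I) * F t
  let a : ℝ → ℂ := fun t => (1 - 1 / 4 * (σ t * σ t) + σ t * τ t * Complex.I) * (P t * F t)
  have hp := fun t => (hσc t).mul (hP t)
  have hb := fun t => ((((hσc t).const_mul (3 / 4 : ℂ)).add ((hτc t).mul_const Complex.I)).neg).mul (hF t)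
  have ha := fun t => ((((((hσc t).mul (hσc t)).const_mul (1 / 4 : ℂ)).const_sub 1).add
    (((hσc t).mul (hτc t)).mul_const Complex.I))).mul ((hP t).mul (hF t))
  have hp' : ∀ t, HasDerivAt p _ t := hp
  have hb' : ∀ t, HasDerivAt b _ t := hb
  have ha' : ∀ t, HasDerivAt a _ t := ha
  have hrelc : ∀ t, (τ t : ℂ) ^ 2 = 1 / 2 + 7 / 16 * (σ t : ℂ) ^ 2 := fun t => by
    have := congrArg (fun z : ℝ => (z : ℂ)) (hrel t)
    push_cast at this
    exact this
  have np : ∀ t, ‖p t‖ ^ 2 = σ t ^ 2 := fun t => by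
    simp only [p]; rw [norm_mul, hP1, Complex.norm_real]; simp
  have nb : ∀ t, ‖b t‖ ^ 2 = 1 / 2 + σ t ^ 2 := fun t => by
    simp only [b]
    rw [norm_mul, hF1, mul_one, norm_neg, ← Complex.normSq_eq_norm_sq, Complex.normSq_apply]
    simp
    linear_combination hrel t
  have hc : ∀ t, b t * p t + a t = ((1 - σ t ^ 2 : ℝ) : ℂ) * (P t * F t) := fun t => by
    simp only [b, p, a]; push_cast; ring
  have nc : ∀ t, ‖b t * p t + a t‖ ^ 2 = (1 - σ t ^ 2) ^ 2 := fun t => by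
    rw [hc, norm_mul, norm_mul, hP1, hF1, Complex.norm_real]; simp
  have hE : ∀ t, Etr p b a t = 1 := fun t => by
    unfold Etr
    rw [nc, np, div_self]
    have := hlt t
    exact pow_ne_zero _ (by linarith)
  have hN : ∀ t, Ntr p b a t = 3 / 2 := fun t => by
    unfold Ntr
    rw [hE, nb, np]; ring
  have hI := Complex.I_sq
  refine ⟨p, b, a, fun t => (hp' t).differentiableAt, fun t => (hb' t).differentiableAt,
    fun t => (ha' t).differentiableAt, ?_, np, nb, nc⟩
  intro t
  have h1 := hPc t
  have h2 := hFc t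
  have h3 := hrelc t
  rw [(hp' t).deriv, (hb' t).deriv, (ha' t).deriv, hE, hN, np]
  simp only [p, b, a, map_mul, map_neg, map_add, Pi.neg_apply, Pi.add_apply, Pi.mul_apply, Complex.conj_ofReal, Complex.conj_I, map_div₀,
    map_ofNat]
  push_cast
  generalize conj (P t) = Pc at *
  generalize conj (F t) = Fc at *
  generalize P t = P at *
  generalize F t = F at *
  generalize (σ t : ℂ) = x at *
  generalize (τ t : ℂ) = y at *
  generalize Complex.I = I at *
  refine ⟨?_, ?_, ?_⟩
  · linear_combination ((1 - 1 / 4 * (x * x) + x * y * I) * (3 / 4 * x - y * I) * P) * h2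
      + (P * (3 / 4 * x * (1 - x ^ 2) - x * y ^ 2)) * hI + (P * x) * h3
  · linear_combination (-(1 - 1 / 4 * (x * x) + x * y * I) * F * x) * h1
      + (F * (-7 / 16 * x * (1 - x ^ 2) + (3 / 4 * x + y * I) * (7 / 4 - x ^ 2 / 4))) * hI
  · linear_combination (P * F * ((y ^ 2 + 7 / 16 * x ^ 2) * (1 - x ^ 2)
      + (1 - x ^ 2 / 4 + x * y * I) * (-1 - x ^ 2 / 2))) * hI - ((1 - x ^ 2) * P * F) * h3

/-- There exists a solution of the truncated Szegő `L(1)` system whose `H^s`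
Sobolev norms grow exponentially, at rate `(2s-1)ω/… `, for every `s > 1/2`. -/
theorem truncated_szego_exponential_sobolev_growth :
    ∃ (p b a : ℝ → ℂ) (ω : ℝ),
      Differentiable ℝ p ∧ Differentiable ℝ b ∧ Differentiable ℝ a ∧
      (∀ t : ℝ, ‖p t‖ < 1) ∧
      (∀ t : ℝ,
        Complex.I * deriv p t =
          ((Ntr p b a t - (1 - ‖p t‖ ^ 2) * Etr p b a t : ℝ) : ℂ) * p t
            + a t * conj (b t) ∧
        Complex.I * deriv b t =
          ((Ntr p b a t + Etr p b a t : ℝ) : ℂ) * b t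
            + (Etr p b a t : ℂ) * a t * conj (p t) ∧
        Complex.I * deriv a t =
          ((Ntr p b a t - Etr p b a t : ℝ) : ℂ) * a t
            - ((Etr p b a t * ‖p t‖ ^ 2 : ℝ) : ℂ) * b t * p t) ∧
      0 < ω ∧
      (∀ s : ℝ, 1 / 2 < s →
        Tendsto
          (fun t : ℝ => (1 / t) * Real.log (∑' n : ℕ,
            ((1 : ℝ) + n) ^ (2 * s) *
              ‖(match n with
                | 0 => b t
                | Nat.succ m => (b t * p t + a t) * p t ^ m : ℂ)‖ ^ 2))
          atTop (𝓝 ((2 * s - 1) * ω))) := by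
  obtain ⟨σ, τ, Θ, hσ, hτ, hΘ, hrel, hlt, hq⟩ := sz_real_ode
  obtain ⟨p, b, a, dp, db, da, heq, np, nb, nc⟩ := sz_main_ode σ τ Θ hσ hτ hΘ hrel hlt
  refine ⟨p, b, a, Real.sqrt 15 / 2, dp, db, da, ?_, heq, by positivity, ?_⟩
  · intro t
    have h1 := np t
    have h2 := hlt t
    rw [← h1] at h2
    exact (sq_lt_one_iff₀ (norm_nonneg _)).1 h2
  intro s hs
  set ω := Real.sqrt 15 / 2 with hω
  obtain ⟨K₁, K₂, hK₁, hK₂, hK⟩ := sz_sum_bounds s hs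
  have hval : ∀ t : ℝ, (∑' n : ℕ, ((1 : ℝ) + n) ^ (2 * s) *
              ‖(match n with
                | 0 => b t
                | Nat.succ m => (b t * p t + a t) * p t ^ m : ℂ)‖ ^ 2) =
      (1 / 2 + σ t ^ 2) + (1 - σ t ^ 2) ^ 2 *
        ∑' m : ℕ, ((2 : ℝ) + m) ^ (2 * s) * (1 - (1 - σ t ^ 2)) ^ m := by
    intro t
    have hsm := (hK (1 - σ t ^ 2) (by linarith [hlt t]) (by nlinarith [sq_nonneg (σ t)])).1
    have hsucc : ∀ m : ℕ, ((1 : ℝ) + (m + 1 : ℕ)) ^ (2 * s) * ‖(b t * p t + a t) * p t ^ m‖ ^ 2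
        = (1 - σ t ^ 2) ^ 2 * (((2 : ℝ) + m) ^ (2 * s) * (1 - (1 - σ t ^ 2)) ^ m) := by
      intro m
      rw [norm_mul, mul_pow, nc, norm_pow, ← pow_mul, mul_comm m 2, pow_mul, np]
      have : (1 : ℝ) + (m + 1 : ℕ) = 2 + m := by push_cast; ring
      rw [this, sub_sub_cancel]
      ring
    rw [Summable.tsum_eq_zero_add]
    · congr 1
      · simp [nb]
      · rw [← tsum_mul_left]
        exact tsum_congr hsucc
    · rw [← summable_nat_add_iff 1]
      exact (hsm.mul_left ((1 - σ t ^ 2) ^ 2)).congr fun m => (hsucc m).symm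
  refine Tendsto.congr (f₁ := fun t : ℝ => 1 / t * Real.log ((1 / 2 + σ t ^ 2) + (1 - σ t ^ 2) ^ 2 *
        ∑' m : ℕ, ((2 : ℝ) + m) ^ (2 * s) * (1 - (1 - σ t ^ 2)) ^ m)) (fun t => by
    rw [hval t]
    simp only [Nat.cast_one]) ?_
  set γ := 2 * s - 1 with hγ
  have hγ0 : 0 < γ := by rw [hγ]; linarith
  set L₁ := K₁ * (15 / 2 : ℝ) ^ (-γ) with hL₁
  have hL₁0 : 0 < L₁ := by positivity
  set L₂ := 3 / 2 + K₂ with hL₂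
  have hL₂0 : 0 < L₂ := by positivity
  have key : ∀ t : ℝ, 0 ≤ t →
      L₁ * Real.exp (γ * ω * t) ≤ (1 / 2 + σ t ^ 2) + (1 - σ t ^ 2) ^ 2 *
        ∑' m : ℕ, ((2 : ℝ) + m) ^ (2 * s) * (1 - (1 - σ t ^ 2)) ^ m ∧
      (1 / 2 + σ t ^ 2) + (1 - σ t ^ 2) ^ 2 *
        ∑' m : ℕ, ((2 : ℝ) + m) ^ (2 * s) * (1 - (1 - σ t ^ 2)) ^ m ≤
        L₂ * Real.exp (γ * ω * t) := by
    intro t ht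
    obtain ⟨hq1, hq2⟩ := hq t ht
    have hσ0 := sq_nonneg (σ t)
    have hσ1 := hlt t
    have hq0 : 0 < 1 - σ t ^ 2 := by linarith
    obtain ⟨-, hlo, hhi⟩ := hK (1 - σ t ^ 2) hq0 (by linarith)
    generalize (∑' m : ℕ, ((2 : ℝ) + m) ^ (2 * s) * (1 - (1 - σ t ^ 2)) ^ m) = Z at *
    have hX : 1 / 2 + σ t ^ 2 ≤ 3 / 2 := by linarith
    have hX0 : 0 ≤ 1 / 2 + σ t ^ 2 := by linarith
    generalize 1 / 2 + σ t ^ 2 = X at *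
    generalize 1 - σ t ^ 2 = q at *
    have hpw : q ^ 2 * q ^ (-(2 * s) - 1) = q ^ (-γ) := by
      rw [← Real.rpow_natCast q 2, ← Real.rpow_add hq0]
      congr 1
      rw [hγ]; push_cast; ring
    have hexp : (Real.exp (-(ω * t))) ^ (-γ) = Real.exp (γ * ω * t) := by
      rw [← Real.exp_mul]; congr 1; ring
    have u1 : q ^ (-γ) ≤ Real.exp (γ * ω * t) := by
      rw [← hexp]
      exact Real.rpow_le_rpow_of_nonpos (Real.exp_pos _) hq1 (by linarith)
    have u2 : (15 / 2 : ℝ) ^ (-γ) * Real.exp (γ * ω * t) ≤ q ^ (-γ) := by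
      rw [← hexp, ← Real.mul_rpow (by norm_num) (Real.exp_pos _).le]
      exact Real.rpow_le_rpow_of_nonpos hq0 hq2 (by linarith)
    have u3 : 1 ≤ Real.exp (γ * ω * t) := Real.one_le_exp (by positivity)
    have v1 : K₁ * q ^ (-γ) ≤ q ^ 2 * Z := by
      rw [← hpw]
      nlinarith [mul_le_mul_of_nonneg_left hlo (sq_nonneg q)]
    have v2 : q ^ 2 * Z ≤ K₂ * q ^ (-γ) := by
      rw [← hpw]
      nlinarith [mul_le_mul_of_nonneg_left hhi (sq_nonneg q)]
    constructor
    · have := mul_le_mul_of_nonneg_left u2 hK₁.le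
      rw [hL₁, mul_assoc]
      linarith
    · have := mul_le_mul_of_nonneg_left u1 hK₂.le
      rw [hL₂, add_mul]
      linarith
  have hlim : ∀ L : ℝ, Tendsto (fun t : ℝ => 1 / t * Real.log L + γ * ω) atTop (𝓝 (γ * ω)) := by
    intro L
    have h := (tendsto_inv_atTop_zero (𝕜 := ℝ)).mul_const (Real.log L)
    have h' := h.add_const (γ * ω)
    simpa [one_div] using h'
  have hlog : ∀ L : ℝ, 0 < L → ∀ t : ℝ, 0 < t →
      1 / t * Real.log (L * Real.exp (γ * ω * t)) = 1 / t * Real.log L + γ * ω := by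
    intro L hL t ht
    rw [Real.log_mul hL.ne' (Real.exp_pos _).ne', Real.log_exp]
    field_simp
  refine tendsto_of_tendsto_of_tendsto_of_le_of_le' (hlim L₁) (hlim L₂) ?_ ?_
  · filter_upwards [eventually_gt_atTop 0] with t ht
    rw [← hlog L₁ hL₁0 t ht]
    exact mul_le_mul_of_nonneg_left (Real.log_le_log (by positivity) (key t ht.le).1) (show 0 ≤ 1 / t by positivity)
  · filter_upwards [eventually_gt_atTop 0] with t ht
    rw [← hlog L₂ hL₂0 t ht]
    have h1 := (key t ht.le).1
    have h2 := (key t ht.le).2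
    have h3 : 0 < L₁ * Real.exp (γ * ω * t) := by positivity
    have h4 := lt_of_lt_of_le h3 h1
    exact mul_le_mul_of_nonneg_left (Real.log_le_log h4 h2) (show 0 ≤ 1 / t by positivity)
end

section
/- Let α : ℕ → ℂ satisfy Σ_{n=0}^∞ |α_n| < ∞ and let h : ℕ → ℂ satisfy Σ_{m=0}^∞ |h_m| < ∞. Define, for n ≥ 1, B_n(α) = conj(α_0)·Σ_{k=0}^n α_k α_{n−k} + 2α_0·Σ_{m=1}^∞ conj(α_m) α_{n+m} (the right-hand side of the truncated Szegő equation for mode n), and define the operators (Kh)_n = Σ_{m=0}^∞ α_{n+m+1}·conj(h_m) and (Dh)_n = −i·conj(α_0)·Σ_{k=0}^n α_k h_{n−k} − i·α_0·Σ_{k=1}^∞ conj(α_k) h_{n+k}. Then for every n ≥ 0: Σ_{m=0}^∞ B_{n+m+1}(α)·conj(h_m) = i·[ (D(Kh))_n − (K(Dh))_n ]. (This is the componentwise form of the Lax pair dK_u/dt = [D_u, K_u] for the truncated Szegő equation.) -/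
open ComplexConjugate

/-- The right-hand side of the truncated Szegő equation for mode `n ≥ 1`:
`B_n(α) = conj(α₀)·Σ_{k=0}^n α_k α_{n-k} + 2 α₀ · Σ_{m=1}^∞ conj(α_m) α_{n+m}`. -/
noncomputable def Btr (α : ℕ → ℂ) (n : ℕ) : ℂ :=
  conj (α 0) * ∑ k ∈ Finset.range (n + 1), α k * α (n - k)
    + 2 * α 0 * ∑' m : ℕ, conj (α (m + 1)) * α (n + m + 1)

/-- The (antilinear) shifted Hankel operator `K`: `(Kh)_n = Σ_{m≥0} α_{n+m+1} conj(h_m)`. -/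
noncomputable def Kop (α h : ℕ → ℂ) (n : ℕ) : ℂ :=
  ∑' m : ℕ, α (n + m + 1) * conj (h m)

/-- The Toeplitz-type operator `D`:
`(Dh)_n = -i conj(α₀) Σ_{k=0}^n α_k h_{n-k} - i α₀ Σ_{k=1}^∞ conj(α_k) h_{n+k}`. -/
noncomputable def Dop (α h : ℕ → ℂ) (n : ℕ) : ℂ :=
  -Complex.I * conj (α 0) * ∑ k ∈ Finset.range (n + 1), α k * h (n - k)
    - Complex.I * α 0 * ∑' k : ℕ, conj (α (k + 1)) * h (n + k + 1)

theorem hasSum_antidiag (f : ℕ × ℕ → ℂ) (hf : Summable f) :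
    HasSum (fun m => ∑ k ∈ Finset.range (m + 1), f (k, m - k)) (∑' k, ∑' j, f (k, j)) := by
  rw [← hf.tsum_prod]
  have h1 := (Finset.HasAntidiagonal.sigmaAntidiagonalEquivProd (A := ℕ)).hasSum_iff.mpr hf.hasSum
  have h2 := h1.sigma (fun m => hasSum_fintype _)
  convert h2 using 2 with m
  rw [← Finset.Nat.sum_antidiagonal_eq_sum_range_succ_mk]
  rw [← Finset.sum_coe_sort]
  rfl

theorem hs_congr {f g : ℕ → ℂ} {a : ℂ} (h : HasSum g a) (e : ∀ m, f m = g m) : HasSum f a := by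
  rw [funext e]; exact h

theorem summable_bd (u v : ℕ → ℂ) (w : ℕ × ℕ → ℂ) (M : ℝ) (hw : ∀ p, ‖w p‖ ≤ M)
    (hu : Summable fun n => ‖u n‖) (hv : Summable fun n => ‖v n‖) :
    Summable fun p : ℕ × ℕ => u p.1 * v p.2 * w p := by
  have h1 : Summable fun p : ℕ × ℕ => ‖u p.1‖ * ‖v p.2‖ :=
    hu.mul_of_nonneg hv (fun _ => norm_nonneg _) (fun _ => norm_nonneg _)
  refine Summable.of_norm_bounded (h1.mul_right M) ?_
  intro p
  rw [norm_mul, norm_mul]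
  exact mul_le_mul_of_nonneg_left (hw p) (by positivity)

theorem bdd_of_summable (u : ℕ → ℂ) (hu : Summable fun n => ‖u n‖) : ∃ M : ℝ, ∀ n, ‖u n‖ ≤ M :=
  ⟨_, fun n => hu.le_tsum n (fun _ _ => norm_nonneg _)⟩

set_option maxHeartbeats 2000000 in
/-- Componentwise form of the Lax pair `dK_u/dt = [D_u, K_u]` for the
truncated Szegő equation. -/
theorem truncated_szego_lax_pair (α h : ℕ → ℂ)
    (hα : Summable fun n => ‖α n‖) (hh : Summable fun m => ‖h m‖) (n : ℕ) :
    ∑' m : ℕ, Btr α (n + m + 1) * conj (h m)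
      = Complex.I * (Dop α (Kop α h) n - Kop α (Dop α h) n) := by
  obtain ⟨M, hM⟩ := bdd_of_summable α hα
  obtain ⟨N, hN⟩ := bdd_of_summable h hh
  obtain ⟨g, hg⟩ : ∃ g : ℕ → ℂ, ∀ m, g m = conj (h m) := ⟨_, fun _ => rfl⟩
  obtain ⟨b, hb⟩ : ∃ b : ℕ → ℂ, ∀ m, b m = conj (α m) := ⟨_, fun _ => rfl⟩
  have hgs : Summable fun m => ‖g m‖ := by simpa [hg] using hh
  have hbs : Summable fun m => ‖b m‖ := by simpa [hb] using hα
  have hα1 : Summable fun m => ‖α (m + 1)‖ := (summable_nat_add_iff 1).mpr hα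
  have hαn : Summable fun m => ‖α (n + m + 1)‖ := by
    have := (summable_nat_add_iff (n + 1)).mpr hα
    refine this.congr fun m => ?_
    congr 2; omega
  have hbs1 : Summable fun m => ‖b (m + 1)‖ := (summable_nat_add_iff 1).mpr hbs
  have hgN : ∀ m, ‖g m‖ ≤ N := by intro m; simpa [hg] using hN m
  -- single sums
  have sK : ∀ q, Summable fun m => α (q + m + 1) * g m := by
    intro q
    refine Summable.of_norm_bounded (hgs.mul_left M) fun m => ?_
    rw [norm_mul]
    exact mul_le_mul_of_nonneg_right (hM _) (norm_nonneg _)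
  -- the double sum over `b k`, `k ≥ 0`
  have sF : Summable fun p : ℕ × ℕ => b p.1 * g p.2 * α (n + p.1 + p.2 + 1) :=
    summable_bd b g (fun p => α (n + p.1 + p.2 + 1)) M (fun p => hM _) hbs hgs
  have sF1 : Summable fun p : ℕ × ℕ => b (p.1 + 1) * g p.2 * α (n + p.1 + p.2 + 2) :=
    summable_bd (fun k => b (k + 1)) g (fun p => α (n + p.1 + p.2 + 2)) M (fun p => hM _) hbs1 hgs
  have sP : Summable fun p : ℕ × ℕ => α (p.1 + 1) * α (n + p.2 + 1) * g (p.1 + p.2 + 1) :=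
    summable_bd (fun k => α (k + 1)) (fun k => α (n + k + 1)) (fun p => g (p.1 + p.2 + 1)) N
      (fun p => hgN _) hα1 hαn
  obtain ⟨T, hT⟩ : ∃ T, T = ∑' k, ∑' j, b (k + 1) * g j * α (n + k + j + 2) := ⟨_, rfl⟩
  obtain ⟨Q, hQ⟩ : ∃ Q, Q = ∑' j, α (n + j + 1) * g j := ⟨_, rfl⟩
  -- X
  have hX : HasSum (fun m => α (n + m + 1) * ∑ k ∈ Finset.range (m + 1), b k * g (m - k))
      (b 0 * Q + T) := by
    have h1 := hasSum_antidiag _ sF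
    have h2 : (∑' k, ∑' j, b k * g j * α (n + k + j + 1)) = b 0 * Q + T := by
      rw [(Summable.prod sF).tsum_eq_zero_add, hT, hQ, ← tsum_mul_left]
      congr 1
      · refine tsum_congr fun j => ?_
        simp only [add_zero]; ring
      · refine tsum_congr fun k => tsum_congr fun j => ?_
        rw [show n + (k + 1) + j + 1 = n + k + j + 2 by omega]
    rw [← h2]
    refine hs_congr h1 fun m => ?_
    rw [Finset.mul_sum]
    refine Finset.sum_congr rfl fun k hk => ?_
    have : k ≤ m := by simpa [Nat.lt_succ_iff] using hk
    simp only
    rw [show n + k + (m - k) + 1 = n + m + 1 by omega]; ring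
  -- Y
  obtain ⟨Y, hYd⟩ : ∃ Y, Y = ∑' m, α (n + m + 1) * ∑' k, α (k + 1) * g (m + k + 1) := ⟨_, rfl⟩
  have sYm : Summable fun m => α (n + m + 1) * ∑' k, α (k + 1) * g (m + k + 1) := by
    have h1 := (Summable.prod sP.prod_symm)
    refine h1.congr fun m => ?_
    rw [← tsum_mul_left]
    refine tsum_congr fun k => ?_
    simp only [Prod.swap]
    rw [show k + m + 1 = m + k + 1 by omega]; ring
  have hY : HasSum (fun j => (∑ k ∈ Finset.range j, α (k + 1) * α (n + j - k)) * g j) Y := by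
    have h1 := hasSum_antidiag _ sP
    have h2 : (∑' k, ∑' m, α (k + 1) * α (n + m + 1) * g (k + m + 1)) = Y := by
      rw [hYd, ← Summable.tsum_comm (f := fun k m => α (k + 1) * α (n + m + 1) * g (k + m + 1)) sP]
      refine tsum_congr fun m => ?_
      rw [← tsum_mul_left]
      refine tsum_congr fun k => ?_
      rw [show k + m + 1 = m + k + 1 by omega]; ring
    rw [← hasSum_nat_add_iff' 1]
    simp only [Finset.range_one, Finset.sum_singleton, Finset.range_zero, Finset.sum_empty,
      zero_mul, sub_zero]
    rw [← h2]
    refine hs_congr h1 fun m => ?_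
    rw [Finset.sum_mul]
    refine Finset.sum_congr rfl fun k hk => ?_
    have : k ≤ m := by simpa [Nat.lt_succ_iff] using hk
    simp only
    rw [show k + (m - k) + 1 = m + 1 by omega, show n + (m - k) + 1 = n + (m + 1) - k by omega]
  -- finite part
  have hS : HasSum (fun m => ∑ k ∈ Finset.range (n + 1), α k * (α (n - k + m + 1) * g m))
      (∑ k ∈ Finset.range (n + 1), α k * ∑' m, α (n - k + m + 1) * g m) :=
    hasSum_sum fun k _ => ((sK (n - k)).hasSum).mul_left _
  -- T as a sum over `m`
  have hTm : HasSum (fun m => (∑' k, b (k + 1) * α (n + m + 1 + k + 1)) * g m) T := by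
    have h1 := (Summable.prod sF1.prod_symm).hasSum
    have h2 : (∑' m, ∑' k, b (k + 1) * g m * α (n + k + m + 2)) = T := by
      rw [hT, Summable.tsum_comm (f := fun k m => b (k + 1) * g m * α (n + k + m + 2)) sF1]
    simp only [Prod.swap] at h1
    rw [h2] at h1
    refine hs_congr h1 fun m => ?_
    rw [← tsum_mul_right]
    refine tsum_congr fun k => ?_
    rw [show n + m + 1 + k + 1 = n + k + m + 2 by omega]; ring
  have hTk : (∑' k, b (k + 1) * ∑' m, α (n + k + 1 + m + 1) * g m) = T := by
    rw [hT]
    refine tsum_congr fun k => ?_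
    rw [← tsum_mul_left]
    refine tsum_congr fun m => ?_
    rw [show n + k + 1 + m + 1 = n + k + m + 2 by omega]; ring
  have hQs : HasSum (fun m => α (n + m + 1) * g m) Q := by rw [hQ]; exact (sK n).hasSum
  -- left-hand side
  have hL := (((hS.add hY).add (hQs.mul_left (α 0))).mul_left (b 0)).add (hTm.mul_left (2 * α 0))
  have hLeft : ∑' m : ℕ, Btr α (n + m + 1) * conj (h m) = b 0 * (∑ k ∈ Finset.range (n + 1), α k * ∑' m, α (n - k + m + 1) * g m + Y + α 0 * Q)
      + 2 * α 0 * T := by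
    refine Eq.trans (tsum_congr fun m => ?_) hL.tsum_eq
    simp only [Btr, ← hg, ← hb]
    have hsplit : ∑ k ∈ Finset.range (n + m + 1 + 1), α k * α (n + m + 1 - k)
        = (∑ k ∈ Finset.range (n + 1), α k * α (n - k + m + 1))
          + ((∑ k ∈ Finset.range m, α (k + 1) * α (n + m - k)) + α 0 * α (n + m + 1)) := by
      rw [show n + m + 1 + 1 = (n + 1) + (m + 1) by omega, Finset.sum_range_add]
      congr 1
      · refine Finset.sum_congr rfl fun k hk => ?_
        have : k ≤ n := by simpa [Nat.lt_succ_iff] using hk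
        rw [show n + m + 1 - k = n - k + m + 1 by omega]
      · rw [← Finset.sum_range_reflect, Finset.sum_range_succ']
        congr 1
        · refine Finset.sum_congr rfl fun k hk => ?_
          have : k < m := by simpa using hk
          rw [show n + 1 + (m + 1 - 1 - (k + 1)) = n + m - k by omega,
            show n + m + 1 - (n + m - k) = k + 1 by omega]; ring
        · rw [show n + 1 + (m + 1 - 1 - 0) = n + m + 1 by omega, Nat.sub_self]; ring
    rw [hsplit]
    simp only [← mul_assoc, ← Finset.sum_mul]
    ring
  rw [hLeft]
  -- right-hand side
  have hK : Kop α (Dop α h) n = Complex.I * α 0 * (b 0 * Q + T) + Complex.I * b 0 * Y := by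
    have h1 := (hX.mul_left (Complex.I * α 0)).add
      ((hYd ▸ sYm.hasSum).mul_left (Complex.I * b 0))
    rw [← h1.tsum_eq, Kop]
    refine tsum_congr fun m => ?_
    simp only [Dop, map_sub, map_mul, map_neg, Complex.conj_I, map_sum, Complex.conj_tsum,
      Complex.conj_conj, hb, hg]
    ring
  have hD : Dop α (Kop α h) n = -Complex.I * b 0 *
      (∑ k ∈ Finset.range (n + 1), α k * ∑' m, α (n - k + m + 1) * g m)
      - Complex.I * α 0 * T := by
    rw [← hTk]
    simp only [Dop, Kop, hb, hg]
  rw [hK, hD]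
  linear_combination -(-b 0 * (∑ k ∈ Finset.range (n + 1), α k * ∑' m, α (n - k + m + 1) * g m)
      - 2 * α 0 * T - α 0 * b 0 * Q - b 0 * Y) * Complex.I_mul_I
end

section
/- Let α : ℕ → ℂ be such that N := Σ_{n=0}^∞ |α_n|² and E := Σ_{n=0}^∞ n·|α_n|² are finite. Then the Hamiltonian of the truncated Szegő equation, H_tr := |α_0|⁴/4 + |α_0|²·Σ_{n=1}^∞ |α_n|² + Re( Σ_{n=2}^∞ Σ_{k=1}^{n−1} conj(α_0)·conj(α_n)·α_k·α_{n−k} ), satisfies H_tr ≥ −N·E (all the series appearing converge absolutely under these hypotheses). -/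
open ComplexConjugate

/-- The Hamiltonian of the truncated Szegő equation,
`H_tr = |α₀|⁴/4 + |α₀|² Σ_{n≥1} |α_n|²
  + Re( Σ_{n≥2} Σ_{k=1}^{n-1} conj(α₀) conj(α_n) α_k α_{n-k} )`,
is bounded below by `-N·E` whenever `N = Σ |α_n|²` and `E = Σ n|α_n|²` are finite.
(The outer series is indexed by `m = n - 2` and the inner by `j = k - 1`.) -/
theorem truncated_szego_hamiltonian_lower_bound (α : ℕ → ℂ) (N E : ℝ)
    (hN : Summable fun n : ℕ => ‖α n‖ ^ 2)
    (hE : Summable fun n : ℕ => (n : ℝ) * ‖α n‖ ^ 2)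
    (hNdef : N = ∑' n : ℕ, ‖α n‖ ^ 2)
    (hEdef : E = ∑' n : ℕ, (n : ℝ) * ‖α n‖ ^ 2) :
    ‖α 0‖ ^ 4 / 4 + ‖α 0‖ ^ 2 * (∑' n : ℕ, ‖α (n + 1)‖ ^ 2)
      + (∑' m : ℕ, ∑ j ∈ Finset.range (m + 1),
          conj (α 0) * conj (α (m + 2)) * α (j + 1) * α (m + 1 - j)).re
      ≥ -(N * E) := by
  set b : ℕ → ℝ := fun n => ‖α (n + 1)‖ ^ 2 with hb
  have hb0 : ∀ n, 0 ≤ b n := fun n => by simp only [hb]; positivity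
  have hbs : Summable b := (summable_nat_add_iff 1).2 hN
  have hbn : Summable (fun n => ‖b n‖) := hbs.norm
  set S : ℝ := ∑' n, b n with hS
  have hS0 : 0 ≤ S := tsum_nonneg hb0
  have hNS : N = ‖α 0‖ ^ 2 + S := by rw [hNdef, hN.tsum_eq_zero_add]
  have hEs : Summable (fun n : ℕ => ((n : ℝ) + 1) * b n) := by
    have h := (summable_nat_add_iff 1).2 hE
    simpa [hb] using h
  have hES : E = ∑' n : ℕ, ((n : ℝ) + 1) * b n := by
    rw [hEdef, hE.tsum_eq_zero_add]; simp [hb]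
  have hSE : S ≤ E := by
    rw [hES]
    refine hbs.tsum_le_tsum (fun n => ?_) hEs
    nlinarith [hb0 n, mul_nonneg (Nat.cast_nonneg (α := ℝ) n) (hb0 n)]
  have hEs1 : Summable (fun n : ℕ => ((n : ℝ) + 1 + 1) * b (n + 1)) := by
    have h := (summable_nat_add_iff 1).2 hEs
    simpa using h
  have hle : ∀ n : ℕ, ((n : ℝ) + 1) * b (n + 1) ≤ ((n : ℝ) + 1 + 1) * b (n + 1) := fun n => by
    nlinarith [hb0 (n + 1)]
  have hGs : Summable (fun n : ℕ => ((n : ℝ) + 1) * b (n + 1)) :=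
    Summable.of_nonneg_of_le (fun n => mul_nonneg (by positivity) (hb0 _)) hle hEs1
  have hGE : ∑' n : ℕ, ((n : ℝ) + 1) * b (n + 1) ≤ E := by
    have h1 := hGs.tsum_le_tsum hle hEs1
    rw [hES, hEs.tsum_eq_zero_add]
    push_cast
    nlinarith [hb0 0]
  have hcs : Summable (fun n => ∑ k ∈ Finset.range (n + 1), b k * b (n - k)) :=
    (summable_norm_sum_mul_range_of_summable_norm hbn hbn).of_norm
  have hc : ∑' n, ∑ k ∈ Finset.range (n + 1), b k * b (n - k) = S * S :=
    (tsum_mul_tsum_eq_tsum_sum_range_of_summable_norm hbn hbn).symm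
  have hterm : ∀ m : ℕ, ‖∑ j ∈ Finset.range (m + 1),
      conj (α 0) * conj (α (m + 2)) * α (j + 1) * α (m + 1 - j)‖ ≤
      ‖α 0‖ ^ 2 * (((m : ℝ) + 1) * b (m + 1)) +
        (1 / 4) * ∑ k ∈ Finset.range (m + 1), b k * b (m - k) := by
    intro m
    have h : ∀ j ∈ Finset.range (m + 1),
        ‖conj (α 0) * conj (α (m + 2)) * α (j + 1) * α (m + 1 - j)‖ ≤
        ‖α 0‖ ^ 2 * b (m + 1) + (1 / 4) * (b j * b (m - j)) := by
      intro j hj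
      have hj' : m + 1 - j = m - j + 1 := by
        have := Finset.mem_range.1 hj
        omega
      rw [hj']
      simp only [hb, norm_mul, RCLike.norm_conj]
      nlinarith [sq_nonneg (‖α 0‖ * ‖α (m + 2)‖ - ‖α (j + 1)‖ * ‖α (m - j + 1)‖ / 2)]
    refine (norm_sum_le_of_le _ h).trans (le_of_eq ?_)
    rw [Finset.sum_add_distrib, Finset.mul_sum (Finset.range (m + 1)), Finset.sum_const,
      Finset.card_range, nsmul_eq_mul]
    push_cast
    ring
  have hRs := (hGs.mul_left (‖α 0‖ ^ 2)).add (hcs.mul_left (1 / 4))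
  have hT := tsum_of_norm_bounded hRs.hasSum hterm
  rw [(hGs.mul_left (‖α 0‖ ^ 2)).tsum_add (hcs.mul_left (1 / 4)), tsum_mul_left, tsum_mul_left,
    hc] at hT
  have hre := (abs_le.1 ((Complex.abs_re_le_norm _).trans hT)).1
  have h1 := mul_le_mul_of_nonneg_left hGE (sq_nonneg ‖α 0‖)
  have h2 := mul_le_mul_of_nonneg_left hSE hS0
  have h3 : 0 ≤ ‖α 0‖ ^ 2 * S := by positivity
  have h4 : 0 ≤ ‖α 0‖ ^ 4 := by positivity
  have h5 : 0 ≤ S * S := by positivity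
  rw [hNS, add_mul]
  linarith
end

section
/- For any complex numbers α_1, …, α_{n−1} and any integer n ≥ 2: | Σ_{k=1}^{n−1} α_k α_{n−k} |² ≤ Σ_{k=1}^{n−1} (2k−1)·|α_k|²·|α_{n−k}|². -/
/-- Cauchy–Schwarz-type estimate: for any complex numbers `α₁, …, α_{n-1}` and `n ≥ 2`,
`|Σ_{k=1}^{n-1} α_k α_{n-k}|² ≤ Σ_{k=1}^{n-1} (2k-1) |α_k|² |α_{n-k}|²`. -/
theorem weighted_cauchy_schwarz_convolution (n : ℕ) (hn : 2 ≤ n) (α : ℕ → ℂ) :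
    ‖∑ k ∈ Finset.Icc 1 (n - 1), α k * α (n - k)‖ ^ 2
      ≤ ∑ k ∈ Finset.Icc 1 (n - 1),
          (2 * (k : ℝ) - 1) * ‖α k‖ ^ 2 * ‖α (n - k)‖ ^ 2 := by
  have hrefl : ∑ k ∈ Finset.Icc 1 (n - 1), (2 * (k : ℝ) - 1) * ‖α k‖ ^ 2 * ‖α (n - k)‖ ^ 2
      = ∑ k ∈ Finset.Icc 1 (n - 1),
          (2 * ((n : ℝ) - k) - 1) * ‖α k‖ ^ 2 * ‖α (n - k)‖ ^ 2 := by
    refine Finset.sum_bij' (fun k _ => n - k) (fun k _ => n - k) ?_ ?_ ?_ ?_ ?_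
    · intro k hk
      simp only [Finset.mem_Icc] at hk ⊢
      omega
    · intro k hk
      simp only [Finset.mem_Icc] at hk ⊢
      omega
    · intro k hk
      simp only [Finset.mem_Icc] at hk
      omega
    · intro k hk
      simp only [Finset.mem_Icc] at hk
      omega
    · intro k hk
      simp only [Finset.mem_Icc] at hk
      have h1 : n - (n - k) = k := by omega
      have h2 : ((n - k : ℕ) : ℝ) = (n : ℝ) - k := Nat.cast_sub (by omega)
      rw [h1, h2]
      ring
  have hsum : ∑ k ∈ Finset.Icc 1 (n - 1), (2 * (k : ℝ) - 1) * ‖α k‖ ^ 2 * ‖α (n - k)‖ ^ 2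
      + ∑ k ∈ Finset.Icc 1 (n - 1),
          (2 * ((n : ℝ) - k) - 1) * ‖α k‖ ^ 2 * ‖α (n - k)‖ ^ 2
      = 2 * (((n : ℝ) - 1) * ∑ k ∈ Finset.Icc 1 (n - 1), (‖α k‖ * ‖α (n - k)‖) ^ 2) := by
    rw [← Finset.sum_add_distrib, Finset.mul_sum, Finset.mul_sum]
    refine Finset.sum_congr rfl fun k _ => ?_
    ring
  have hcs := sq_sum_le_card_mul_sum_sq (s := Finset.Icc 1 (n - 1))
    (f := fun k => ‖α k‖ * ‖α (n - k)‖)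
  have hcard : ((Finset.Icc 1 (n - 1)).card : ℝ) = (n : ℝ) - 1 := by
    rw [Nat.card_Icc, Nat.add_sub_cancel, Nat.cast_sub (by omega), Nat.cast_one]
  rw [hcard] at hcs
  have hnorm : ‖∑ k ∈ Finset.Icc 1 (n - 1), α k * α (n - k)‖
      ≤ ∑ k ∈ Finset.Icc 1 (n - 1), ‖α k‖ * ‖α (n - k)‖ := by
    refine (norm_sum_le _ _).trans (le_of_eq ?_)
    exact Finset.sum_congr rfl fun k _ => norm_mul _ _
  have hsq := pow_le_pow_left₀ (norm_nonneg _) hnorm 2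
  linarith
end

section
/- Let α : ℕ → ℂ be such that N := Σ_{n=0}^∞ |α_n|² and E := Σ_{n=0}^∞ n·|α_n|² are finite. Then Σ_{n=2}^∞ | Σ_{k=1}^{n−1} α_k α_{n−k} |² ≤ (2E − N + |α_0|²)·(N − |α_0|²) = 2NE − 2E|α_0|² − (N − |α_0|²)². -/
theorem szego_pointwise_aux (b : ℕ → ℂ) (m : ℕ) :
    ‖∑ j ∈ Finset.range (m + 1), b j * b (m - j)‖ ^ 2
      ≤ ∑ j ∈ Finset.range (m + 1), ((2 * (j : ℝ) + 1) * ‖b j‖ ^ 2) * ‖b (m - j)‖ ^ 2 := by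
  have h1 : ‖∑ j ∈ Finset.range (m + 1), b j * b (m - j)‖ ^ 2
      ≤ (∑ j ∈ Finset.range (m + 1), ‖b j * b (m - j)‖) ^ 2 := by
    gcongr
    exact norm_sum_le _ _
  have h2 := sq_sum_le_card_mul_sum_sq (s := Finset.range (m + 1))
    (f := fun j => ‖b j * b (m - j)‖)
  rw [Finset.card_range] at h2
  refine (h1.trans h2).trans (le_of_eq ?_)
  set S := ∑ j ∈ Finset.range (m + 1),
    ((2 * (j : ℝ) + 1) * ‖b j‖ ^ 2) * ‖b (m - j)‖ ^ 2 with hS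
  have h3 : S = ∑ j ∈ Finset.range (m + 1),
      ((2 * ((m : ℝ) - j) + 1) * ‖b (m - j)‖ ^ 2) * ‖b j‖ ^ 2 := by
    rw [hS, ← Finset.sum_range_reflect]
    refine Finset.sum_congr rfl fun j hj => ?_
    have hj' : j ≤ m := by
      have := Finset.mem_range.mp hj
      omega
    have e1 : m + 1 - 1 - j = m - j := by omega
    have e2 : m - (m - j) = j := by omega
    rw [e1, e2, Nat.cast_sub hj']
  have h4 : S + S = 2 * (((m + 1 : ℕ) : ℝ) *
      ∑ j ∈ Finset.range (m + 1), ‖b j * b (m - j)‖ ^ 2) := by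
    nth_rewrite 2 [h3]
    rw [hS, ← Finset.sum_add_distrib, Finset.mul_sum, Finset.mul_sum]
    refine Finset.sum_congr rfl fun j _ => ?_
    rw [norm_mul]
    push_cast
    ring
  linarith

/-- Summed estimate used in the lower bound for the truncated Szegő Hamiltonian:
`Σ_{n=2}^∞ |Σ_{k=1}^{n-1} α_k α_{n-k}|² ≤ (2E - N + |α₀|²)(N - |α₀|²)
  = 2NE - 2E|α₀|² - (N - |α₀|²)²`,
where `N = Σ |α_n|²` and `E = Σ n|α_n|²`. (The outer series is indexed by `m = n - 2`.) -/
theorem truncated_szego_convolution_sum_bound (α : ℕ → ℂ) (N E : ℝ)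
    (hN : Summable fun n : ℕ => ‖α n‖ ^ 2)
    (hE : Summable fun n : ℕ => (n : ℝ) * ‖α n‖ ^ 2)
    (hNdef : N = ∑' n : ℕ, ‖α n‖ ^ 2)
    (hEdef : E = ∑' n : ℕ, (n : ℝ) * ‖α n‖ ^ 2) :
    (∑' m : ℕ, ‖∑ k ∈ Finset.Icc 1 (m + 1), α k * α (m + 2 - k)‖ ^ 2)
        ≤ (2 * E - N + ‖α 0‖ ^ 2) * (N - ‖α 0‖ ^ 2)
      ∧ (2 * E - N + ‖α 0‖ ^ 2) * (N - ‖α 0‖ ^ 2)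
        = 2 * N * E - 2 * E * ‖α 0‖ ^ 2 - (N - ‖α 0‖ ^ 2) ^ 2 := by
  refine ⟨?_, by ring⟩
  have hg : Summable fun j : ℕ => ‖α (j + 1)‖ ^ 2 :=
    (summable_nat_add_iff (f := fun n : ℕ => ‖α n‖ ^ 2) 1).2 hN
  have he : Summable fun j : ℕ => ((j + 1 : ℕ) : ℝ) * ‖α (j + 1)‖ ^ 2 :=
    (summable_nat_add_iff (f := fun n : ℕ => (n : ℝ) * ‖α n‖ ^ 2) 1).2 hE
  have hf_eq : (fun j : ℕ => (2 * (j : ℝ) + 1) * ‖α (j + 1)‖ ^ 2)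
      = fun j : ℕ => 2 * (((j + 1 : ℕ) : ℝ) * ‖α (j + 1)‖ ^ 2) - ‖α (j + 1)‖ ^ 2 := by
    funext j
    push_cast
    ring
  have hf : Summable fun j : ℕ => (2 * (j : ℝ) + 1) * ‖α (j + 1)‖ ^ 2 := by
    rw [hf_eq]
    exact (he.mul_left 2).sub hg
  have hgN : ∑' j : ℕ, ‖α (j + 1)‖ ^ 2 = N - ‖α 0‖ ^ 2 := by
    rw [hNdef, hN.tsum_eq_zero_add]
    ring
  have heE : ∑' j : ℕ, ((j + 1 : ℕ) : ℝ) * ‖α (j + 1)‖ ^ 2 = E := by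
    rw [hEdef, hE.tsum_eq_zero_add]
    simp
  have hfE : ∑' j : ℕ, (2 * (j : ℝ) + 1) * ‖α (j + 1)‖ ^ 2 = 2 * E - N + ‖α 0‖ ^ 2 := by
    rw [hf_eq, (he.mul_left 2).tsum_sub hg, tsum_mul_left, heE, hgN]
    ring
  have hfn : Summable fun j : ℕ => ‖(2 * (j : ℝ) + 1) * ‖α (j + 1)‖ ^ 2‖ := hf.norm
  have hgn : Summable fun j : ℕ => ‖‖α (j + 1)‖ ^ 2‖ := hg.norm
  have hprod := tsum_mul_tsum_eq_tsum_sum_range_of_summable_norm hfn hgn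
  have hps := (summable_norm_sum_mul_range_of_summable_norm hfn hgn).of_norm
  rw [hfE, hgN] at hprod
  rw [hprod]
  have hpt : ∀ m : ℕ, ‖∑ k ∈ Finset.Icc 1 (m + 1), α k * α (m + 2 - k)‖ ^ 2
      ≤ ∑ j ∈ Finset.range (m + 1),
        ((2 * (j : ℝ) + 1) * ‖α (j + 1)‖ ^ 2) * ‖α (m - j + 1)‖ ^ 2 := by
    intro m
    have hs : ∑ k ∈ Finset.Icc 1 (m + 1), α k * α (m + 2 - k)
        = ∑ j ∈ Finset.range (m + 1), α (j + 1) * α (m - j + 1) := by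
      symm
      refine Finset.sum_bij (fun j _ => j + 1) ?_ ?_ ?_ ?_
      · intro j hj
        simp at hj ⊢
        omega
      · intro a _ b _ h
        omega
      · intro k hk
        simp at hk
        exact ⟨k - 1, by simp; omega, by omega⟩
      · intro j hj
        simp at hj
        have : m + 2 - (j + 1) = m - j + 1 := by omega
        rw [this]
    rw [hs]
    exact szego_pointwise_aux (fun j => α (j + 1)) m
  exact (Summable.of_nonneg_of_le (fun _ => by positivity) hpt hps).tsum_le_tsum hpt hps
end

section
/- Let β ∈ ℝ and let α : ℕ → ℂ satisfy Σ_{n=0}^∞ |α_n| < ∞ and α_n = 0 for every even n. Then: (i) for every even n (including n = 0), the right-hand side of the β-Szegő equation for mode n vanishes: Σ_{m=0}^∞ Σ_{k=0}^{n+m} conj(α_m)·α_k·α_{n+m−k} − β·Σ_{m=1}^∞ Σ_{k=1}^{n+m−1} conj(α_m)·α_k·α_{n+m−k} = 0; (ii) for every odd n, it equals (1−β) times the cubic Szegő right-hand side: Σ_{m=0}^∞ Σ_{k=0}^{n+m} conj(α_m)·α_k·α_{n+m−k} − β·Σ_{m=1}^∞ Σ_{k=1}^{n+m−1} conj(α_m)·α_k·α_{n+m−k}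 = (1−β)·Σ_{m=0}^∞ Σ_{k=0}^{n+m} conj(α_m)·α_k·α_{n+m−k}. Hence for β ≠ 1 the subspace of sequences supported on odd modes is an invariant manifold on which the β-Szegő equation reduces (after rescaling) to the cubic Szegő equation. -/
open ComplexConjugate

/-- On sequences supported on odd modes, the right-hand side of the β-Szegő equation
vanishes for even modes and equals `(1-β)` times the cubic Szegő right-hand side for
odd modes.  Here the β-Szegő right-hand side for mode `n` is
`Σ_{m≥0} Σ_{k=0}^{n+m} conj(α_m) α_k α_{n+m-k}
  - β Σ_{m≥1} Σ_{k=1}^{n+m-1} conj(α_m) α_k α_{n+m-k}`,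
the second (all-positive-index) sum being reindexed by `m ↦ m+1`. -/
theorem beta_szego_odd_modes_invariant (β : ℝ) (α : ℕ → ℂ)
    (hα : Summable fun n => ‖α n‖) (heven : ∀ n : ℕ, Even n → α n = 0) :
    (∀ n : ℕ, Even n →
      (∑' m : ℕ, ∑ k ∈ Finset.range (n + m + 1), conj (α m) * α k * α (n + m - k))
        - (β : ℂ) * ∑' m : ℕ, ∑ k ∈ Finset.Icc 1 (n + m),
            conj (α (m + 1)) * α k * α (n + m + 1 - k) = 0)
    ∧ (∀ n : ℕ, Odd n →
      (∑' m : ℕ, ∑ k ∈ Finset.range (n + m + 1), conj (α m) * α k * α (n + m - k))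
        - (β : ℂ) * ∑' m : ℕ, ∑ k ∈ Finset.Icc 1 (n + m),
            conj (α (m + 1)) * α k * α (n + m + 1 - k)
        = (1 - (β : ℂ)) *
            ∑' m : ℕ, ∑ k ∈ Finset.range (n + m + 1), conj (α m) * α k * α (n + m - k)) := by
  have h0 : α 0 = 0 := heven 0 (by simp)
  have key : ∀ n : ℕ,
      (∑' m : ℕ, ∑ k ∈ Finset.Icc 1 (n + m),
        conj (α (m + 1)) * α k * α (n + m + 1 - k))
      = ∑' m : ℕ, ∑ k ∈ Finset.range (n + m + 1), conj (α m) * α k * α (n + m - k) := by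
    intro n
    have hsub : Function.support
        (fun m : ℕ => ∑ k ∈ Finset.range (n + m + 1), conj (α m) * α k * α (n + m - k))
        ⊆ Set.range Nat.succ := by
      intro m hm
      cases m with
      | zero => simp [h0] at hm
      | succ m => exact ⟨m, rfl⟩
    rw [← Function.Injective.tsum_eq Nat.succ_injective hsub]
    refine tsum_congr fun m => ?_
    refine Finset.sum_subset ?_ ?_
    · intro k hk
      simp only [Finset.mem_Icc, Finset.mem_range] at hk ⊢
      omega
    · intro k hk hk'
      simp only [Finset.mem_Icc, Finset.mem_range] at hk hk'
      have hc : k = 0 ∨ k = n + m + 1 := by omega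
      rcases hc with rfl | rfl <;> simp [h0]
  refine ⟨fun n hn => ?_, fun n _ => ?_⟩
  · have hz : (∑' m : ℕ, ∑ k ∈ Finset.range (n + m + 1),
        conj (α m) * α k * α (n + m - k)) = 0 := by
      refine (tsum_congr fun m => ?_).trans tsum_zero
      refine Finset.sum_eq_zero fun k hk => ?_
      rw [Finset.mem_range] at hk
      have hc : Even m ∨ Even k ∨ Even (n + m - k) := by
        simp only [Nat.even_iff] at hn ⊢
        omega
      rcases hc with h | h | h <;> simp [heven _ h]
    rw [key, hz]
    simp
  · rw [key]
    ring
end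

section
/- Let I ⊆ ℝ be an interval and let p, b, a : I → ℂ be differentiable with |p(t)| < 1 for all t ∈ I, satisfying the system i p' = (N − (1−|p|²)E)p + a·conj(b), i b' = (N+E)b + E·a·conj(p), i a' = (N−E)a − E|p|²·b·p, where E(t) = |b(t)p(t)+a(t)|²/(1−|p(t)|²)² and N(t) = |b(t)|² + (1−|p(t)|²)E(t). Define α_0(t) = b(t) and α_n(t) = (b(t)p(t)+a(t))·p(t)^{n−1} for n ≥ 1. Then α solves the truncated Szegő equation: for all t ∈ I, i·α_0'(t) = Σ_{m=0}^∞ Σ_{k=0}^m conj(α_m)·α_k·α_{m−k}, and for every n ≥ 1, i·α_n'(t) = conj(α_0)·Σ_{k=0}^n α_k α_{n−k} + 2α_0·Σ_{m=1}^∞ conj(α_m)·α_{n+m} (all series converging absolutely since |p| < 1). -/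
open ComplexConjugate

/-- The convolution sum of the ansatz. -/
lemma conv_ansatz (x : ℕ → ℂ) (b c p : ℂ) (h0 : x 0 = b) (hn : ∀ n, x (n + 1) = c * p ^ n)
    (j : ℕ) : ∑ k ∈ Finset.range (j + 1 + 1), x k * x (j + 1 - k)
      = 2 * b * c * p ^ j + j * c ^ 2 * p ^ (j - 1) := by
  rw [Finset.sum_range_succ, Finset.sum_range_succ']
  have h : ∀ k ∈ Finset.range j, x (k + 1) * x (j + 1 - (k + 1)) = c ^ 2 * p ^ (j - 1) := by
    intro k hk
    have hk' := Finset.mem_range.1 hk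
    obtain ⟨d, rfl⟩ : ∃ d, j = k + d + 1 := ⟨j - k - 1, by omega⟩
    have e1 : k + d + 1 + 1 - (k + 1) = d + 1 := by omega
    have e2 : k + d + 1 - 1 = k + d := by omega
    rw [e1, e2, hn, hn, pow_add]
    ring
  rw [Finset.sum_congr rfl h]
  simp [h0, hn]
  ring

lemma hasSum_congr_both {f g : ℕ → ℂ} {x y : ℂ} (h : HasSum f x) (h1 : ∀ n, g n = f n)
    (h2 : y = x) : HasSum g y := by
  obtain rfl : g = f := funext h1
  rw [h2]
  exact h

lemma hasSum_geom_deriv (p q : ℂ) (h : ‖q * p‖ < 1) :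
    HasSum (fun n : ℕ => q ^ n * (n * p ^ (n - 1))) (q / (1 - q * p) ^ 2) := by
  rw [← hasSum_nat_add_iff' 1]
  have h1 := (hasSum_choose_mul_geometric_of_norm_lt_one 1 h).mul_left q
  refine hasSum_congr_both h1 (fun n => ?_) ?_
  · simp [mul_pow, pow_succ]
    ring
  · simp [div_eq_mul_inv]

/-- If `p, b, a` solve the truncated Szegő `L(1)` ODE system on an interval `I`,
then the sequence `α₀ = b`, `α_n = (bp+a) p^{n-1}` (`n ≥ 1`) solves the truncated
Szegő equation on `I`. -/
theorem L1_ansatz_solves_truncated_szego (I : Set ℝ) (hI : I.OrdConnected)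
    (p b a : ℝ → ℂ)
    (hp : ∀ t ∈ I, DifferentiableAt ℝ p t)
    (hb : ∀ t ∈ I, DifferentiableAt ℝ b t)
    (ha : ∀ t ∈ I, DifferentiableAt ℝ a t)
    (hp1 : ∀ t ∈ I, ‖p t‖ < 1)
    (hode : ∀ t ∈ I,
      Complex.I * deriv p t =
        ((Ntr p b a t - (1 - ‖p t‖ ^ 2) * Etr p b a t : ℝ) : ℂ) * p t
          + a t * conj (b t) ∧
      Complex.I * deriv b t =
        ((Ntr p b a t + Etr p b a t : ℝ) : ℂ) * b t
          + (Etr p b a t : ℂ) * a t * conj (p t) ∧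
      Complex.I * deriv a t =
        ((Ntr p b a t - Etr p b a t : ℝ) : ℂ) * a t
          - ((Etr p b a t * ‖p t‖ ^ 2 : ℝ) : ℂ) * b t * p t)
    (α : ℕ → ℝ → ℂ)
    (hα0 : ∀ t : ℝ, α 0 t = b t)
    (hαn : ∀ (n : ℕ) (t : ℝ), α (n + 1) t = (b t * p t + a t) * p t ^ n) :
    ∀ t ∈ I,
      (Complex.I * deriv (α 0) t =
        ∑' m : ℕ, ∑ k ∈ Finset.range (m + 1), conj (α m t) * α k t * α (m - k) t)
      ∧ ∀ n : ℕ, 1 ≤ n →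
          Complex.I * deriv (α n) t =
            conj (α 0 t) * ∑ k ∈ Finset.range (n + 1), α k t * α (n - k) t
              + 2 * α 0 t * ∑' m : ℕ, conj (α (m + 1) t) * α (n + m + 1) t := by
  intro t ht
  obtain ⟨h1, h2, h3⟩ := hode t ht
  have hr := hp1 t ht
  have hdp := (hp t ht).hasDerivAt
  have hdb := (hb t ht).hasDerivAt
  have hda := (ha t ht).hasDerivAt
  have hqp : ‖conj (p t) * p t‖ < 1 := by
    rw [norm_mul, Complex.norm_conj]
    nlinarith [norm_nonneg (p t)]
  have hne : (1 - conj (p t) * p t) ≠ 0 := by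
    intro h
    rw [← sub_eq_zero.1 h] at hqp
    simp at hqp
  have hsq : ∀ z : ℂ, ((‖z‖ : ℝ) : ℂ) ^ 2 = conj z * z := fun z => by
    rw [Complex.conj_mul']
  have hE : ((Etr p b a t : ℝ) : ℂ) = conj (b t * p t + a t) * (b t * p t + a t)
      / (1 - conj (p t) * p t) ^ 2 := by
    unfold Etr
    push_cast
    rw [hsq, hsq]
  have hN : ((Ntr p b a t : ℝ) : ℂ) = conj (b t) * b t
      + (1 - conj (p t) * p t) * (Etr p b a t : ℂ) := by
    unfold Ntr
    push_cast
    rw [hsq, hsq]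
  push_cast at h1 h2 h3
  rw [hN, hsq] at h1 h3
  rw [hN] at h2
  have hconv := conv_ansatz (fun n => α n t) (b t) (b t * p t + a t) (p t) (hα0 t)
    (fun n => hαn n t)
  have hgeo := hasSum_geometric_of_norm_lt_one hqp
  have hgd := hasSum_geom_deriv (p t) (conj (p t)) hqp
  have hc : ∀ n, conj (α (n + 1) t) = conj (b t * p t + a t) * conj (p t) ^ n := fun n => by
    rw [hαn, map_mul, map_pow]
  generalize (Etr p b a t : ℂ) = E at *
  constructor
  · have hα : α 0 = b := funext hα0
    have hS : HasSum (fun m : ℕ => ∑ k ∈ Finset.range (m + 1),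
        conj (α m t) * α k t * α (m - k) t) (Complex.I * deriv b t) := by
      rw [← hasSum_nat_add_iff' 1]
      have := (hgeo.mul_left (2 * b t * (conj (b t * p t + a t) * (b t * p t + a t)))).add
        (hgd.mul_left (conj (b t * p t + a t) * (b t * p t + a t) ^ 2))
      refine hasSum_congr_both this (fun m => ?_) ?_
      · simp only [mul_assoc, ← Finset.mul_sum]
        rw [hconv m, hc, mul_pow]
        ring
      · rw [h2, hE]
        simp only [Finset.sum_range_one, zero_add, hα0, Nat.sub_zero]
        field_simp
        ring
    rw [hS.tsum_eq, hα]
  · intro n hn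
    obtain ⟨j, rfl⟩ : ∃ j, n = j + 1 := ⟨n - 1, by omega⟩
    have hS : HasSum (fun m : ℕ => conj (α (m + 1) t) * α (j + 1 + m + 1) t)
        (conj (b t * p t + a t) * (b t * p t + a t) * p t ^ (j + 1)
          * (1 - conj (p t) * p t)⁻¹) := by
      refine hasSum_congr_both (hgeo.mul_left
        (conj (b t * p t + a t) * (b t * p t + a t) * p t ^ (j + 1))) (fun m => ?_) rfl
      rw [hc, hαn, mul_pow, pow_add]
      ring
    have hα : α (j + 1) = fun t => (b t * p t + a t) * p t ^ j := funext (hαn j)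
    have hd : HasDerivAt (α (j + 1))
        ((deriv b t * p t + b t * deriv p t + deriv a t) * p t ^ j
          + (b t * p t + a t) * (j * p t ^ (j - 1) * deriv p t)) t := by
      rw [hα]
      exact ((hdb.mul hdp).add hda).mul (hdp.pow j)
    have hG : conj (b t * p t + a t) * (b t * p t + a t) * p t ^ (j + 1)
          * (1 - conj (p t) * p t)⁻¹ = E * (1 - conj (p t) * p t) * p t ^ (j + 1) := by
      rw [hE]
      field_simp
    rw [hS.tsum_eq, hG, hconv j, hd.deriv, hα0]
    clear hE hG hS hd hα hgd hgeo hconv hN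
    linear_combination (p t * p t ^ j) * h2 + p t ^ j * h3 + (b t * p t ^ j
      + (b t * p t + a t) * j * p t ^ (j - 1)) * h1
end

section
/- Let I ⊆ ℝ be an interval and let p, b, a : I → ℂ be differentiable with |p(t)| < 1 for all t ∈ I, satisfying i p' = (N − (1−|p|²)E)p + a·conj(b), i b' = (N+E)b + E·a·conj(p), i a' = (N−E)a − E|p|²·b·p, where E(t) = |b(t)p(t)+a(t)|²/(1−|p(t)|²)² and N(t) = |b(t)|² + (1−|p(t)|²)E(t). Then the functions t ↦ N(t) and t ↦ E(t) are constant on I. -/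
open ComplexConjugate

theorem aux_const (I : Set ℝ) (hI : I.OrdConnected) (f : ℝ → ℝ)
    (h : ∀ t ∈ I, HasDerivAt f 0 t) : ∀ t ∈ I, ∀ t' ∈ I, f t = f t' := by
  intro t ht t' ht'
  have := Convex.norm_image_sub_le_of_norm_hasDerivWithin_le (f := f) (f' := fun _ => 0) (C := 0)
    (s := I) (fun x hx => (h x hx).hasDerivWithinAt) (by simp) hI.convex ht' ht
  simp at this
  linarith

theorem aux_sq (f : ℝ → ℂ) (t : ℝ) (f' : ℂ) (h : HasDerivAt f f' t) :
    HasDerivAt (fun s => ‖f s‖ ^ 2) (2 * ((f t).re * f'.re + (f t).im * f'.im)) t := by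
  have := h.norm_sq
  convert this using 1
  simp [Complex.inner]
  ring

theorem aux_I (z w : ℂ) (h : Complex.I * z = w) : z.re = w.im ∧ z.im = - w.re := by
  subst h
  simp

/-- Along solutions of the truncated Szegő `L(1)` ODE system on an interval `I`,
the quantities `N` and `E` are constant. -/
theorem truncated_szego_L1_N_E_conserved (I : Set ℝ) (hI : I.OrdConnected)
    (p b a : ℝ → ℂ)
    (hp : ∀ t ∈ I, DifferentiableAt ℝ p t)
    (hb : ∀ t ∈ I, DifferentiableAt ℝ b t)
    (ha : ∀ t ∈ I, DifferentiableAt ℝ a t)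
    (hp1 : ∀ t ∈ I, ‖p t‖ < 1)
    (hode : ∀ t ∈ I,
      Complex.I * deriv p t =
        ((Ntr p b a t - (1 - ‖p t‖ ^ 2) * Etr p b a t : ℝ) : ℂ) * p t
          + a t * conj (b t) ∧
      Complex.I * deriv b t =
        ((Ntr p b a t + Etr p b a t : ℝ) : ℂ) * b t
          + (Etr p b a t : ℂ) * a t * conj (p t) ∧
      Complex.I * deriv a t =
        ((Ntr p b a t - Etr p b a t : ℝ) : ℂ) * a t
          - ((Etr p b a t * ‖p t‖ ^ 2 : ℝ) : ℂ) * b t * p t) :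
    ∀ t ∈ I, ∀ t' ∈ I,
      Ntr p b a t = Ntr p b a t' ∧ Etr p b a t = Etr p b a t' := by
  have key : ∀ t ∈ I, HasDerivAt (Ntr p b a) 0 t ∧ HasDerivAt (Etr p b a) 0 t := by
    intro t ht
    obtain ⟨h1, h2, h3⟩ := hode t ht
    have dp := (hp t ht).hasDerivAt
    have db := (hb t ht).hasDerivAt
    have da := (ha t ht).hasDerivAt
    have hr : 0 < 1 - ‖p t‖ ^ 2 := by
      have := hp1 t ht
      have := norm_nonneg (p t)
      nlinarith
    have hE : Etr p b a t * (1 - ‖p t‖ ^ 2) ^ 2 = ‖b t * p t + a t‖ ^ 2 := by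
      unfold Etr
      field_simp
    have hN : Ntr p b a t = ‖b t‖ ^ 2 + (1 - ‖p t‖ ^ 2) * Etr p b a t := rfl
    have sp := aux_sq _ _ _ dp
    have sb := aux_sq _ _ _ db
    have sw := aux_sq (fun s => b s * p s + a s) _ _ ((db.mul dp).add da)
    obtain ⟨p1, p2⟩ := aux_I _ _ h1
    obtain ⟨b1, b2⟩ := aux_I _ _ h2
    obtain ⟨a1, a2⟩ := aux_I _ _ h3
    have np : ‖p t‖ ^ 2 = (p t).re ^ 2 + (p t).im ^ 2 := by
      rw [← Complex.normSq_eq_norm_sq, Complex.normSq_apply]; ring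
    have nb : ‖b t‖ ^ 2 = (b t).re ^ 2 + (b t).im ^ 2 := by
      rw [← Complex.normSq_eq_norm_sq, Complex.normSq_apply]; ring
    generalize hS : (p t * b t * conj (b t * p t + a t)).im = S
    have ep : 2 * ((p t).re * (deriv p t).re + (p t).im * (deriv p t).im) = -2 * S := by
      rw [p1, p2, ← hS, hN]
      simp [-Complex.ofReal_sub, -Complex.ofReal_add, -Complex.ofReal_mul, -Complex.ofReal_pow]
      rw [nb]
      ring
    have eb : 2 * ((b t).re * (deriv b t).re + (b t).im * (deriv b t).im)
        = -2 * Etr p b a t * S := by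
      rw [b1, b2, ← hS]
      simp [-Complex.ofReal_sub, -Complex.ofReal_add, -Complex.ofReal_mul, -Complex.ofReal_pow]
      ring
    have ew : 2 * ((b t * p t + a t).re * (deriv b t * p t + b t * deriv p t + deriv a t).re
        + (b t * p t + a t).im * (deriv b t * p t + b t * deriv p t + deriv a t).im)
        = 4 * Etr p b a t * (1 - ‖p t‖ ^ 2) * S := by
      simp only [Complex.add_re, Complex.add_im, Complex.mul_re, Complex.mul_im]
      rw [p1, p2, b1, b2, a1, a2, ← hS, hN]
      simp [-Complex.ofReal_sub, -Complex.ofReal_add, -Complex.ofReal_mul, -Complex.ofReal_pow]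
      rw [nb, np]
      ring
    rw [ep] at sp
    rw [eb] at sb
    have sw' := sw.congr_deriv ew
    have sr := sp.const_sub 1
    have dE : HasDerivAt (Etr p b a) 0 t := by
      have := sw'.div (sr.pow 2) (pow_ne_zero 2 hr.ne')
      refine this.congr_deriv ?_
      simp only [Pi.pow_apply]
      rw [← hE]
      rw [div_eq_zero_iff]
      left
      ring
    refine ⟨?_, dE⟩
    refine (sb.add (sr.mul dE)).congr_deriv ?_
    ring
  intro t ht t' ht'
  exact ⟨aux_const I hI _ (fun s hs => (key s hs).1) t ht t' ht',
    aux_const I hI _ (fun s hs => (key s hs).2) t ht t' ht'⟩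
end

section
/- Let I ⊆ ℝ be an interval and let p, b, a : I → ℂ be differentiable with |p(t)| < 1 for all t ∈ I, satisfying i p' = (N − (1−|p|²)E)p + a·conj(b), i b' = (N+E)b + E·a·conj(p), i a' = (N−E)a − E|p|²·b·p, where E(t) = |b(t)p(t)+a(t)|²/(1−|p(t)|²)² and N(t) = |b(t)|² + (1−|p(t)|²)E(t). Then the quantity S(t) := (N+E)|p|² + (E/2)|p|⁴ + (a·conj(b)·conj(p) + conj(a)·b·p) is constant on I. -/
open ComplexConjugate

/-- `S = (N+E)|p|² + (E/2)|p|⁴ + (a conj(b) conj(p) + conj(a) b p)`,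
evaluated pointwise in time (a complex number, which is in fact real). -/
noncomputable def Str (p b a : ℝ → ℂ) (t : ℝ) : ℂ :=
  ((Ntr p b a t + Etr p b a t : ℝ) : ℂ) * ((‖p t‖ ^ 2 : ℝ) : ℂ)
    + ((Etr p b a t / 2 : ℝ) : ℂ) * ((‖p t‖ ^ 4 : ℝ) : ℂ)
    + (a t * conj (b t) * conj (p t) + conj (a t) * b t * p t)

theorem cnorm_sq (z : ℂ) : ((‖z‖ : ℝ) : ℂ) ^ 2 = z * conj z := by
  rw [Complex.mul_conj, Complex.normSq_eq_norm_sq]; push_cast; rfl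

theorem Etr_c (p b a : ℝ → ℂ) (t : ℝ) : ((Etr p b a t : ℝ) : ℂ) =
    ((b t * p t + a t) * (conj (b t) * conj (p t) + conj (a t))) / (1 - p t * conj (p t)) ^ 2 := by
  unfold Etr
  push_cast
  rw [cnorm_sq, cnorm_sq]
  simp

theorem Ntr_c (p b a : ℝ → ℂ) (t : ℝ) : ((Ntr p b a t : ℝ) : ℂ) =
    b t * conj (b t) + (1 - p t * conj (p t)) * ((Etr p b a t : ℝ) : ℂ) := by
  unfold Ntr
  push_cast
  rw [cnorm_sq, cnorm_sq]

theorem Str_c (p b a : ℝ → ℂ) (t : ℝ) : Str p b a t =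
    (((Ntr p b a t : ℝ) : ℂ) + ((Etr p b a t : ℝ) : ℂ)) * (p t * conj (p t))
    + ((Etr p b a t : ℝ) : ℂ) / 2 * (p t * conj (p t)) ^ 2
    + (a t * conj (b t) * conj (p t) + conj (a t) * b t * p t) := by
  unfold Str
  push_cast
  rw [show ((‖p t‖ : ℝ) : ℂ) ^ 4 = (((‖p t‖ : ℝ) : ℂ) ^ 2) ^ 2 by ring, cnorm_sq]

theorem Str_deriv (p b a : ℝ → ℂ) (t : ℝ)
    (hp : DifferentiableAt ℝ p t)
    (hb : DifferentiableAt ℝ b t)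
    (ha : DifferentiableAt ℝ a t)
    (hp1 : ‖p t‖ < 1)
    (hode :
      Complex.I * deriv p t =
        ((Ntr p b a t - (1 - ‖p t‖ ^ 2) * Etr p b a t : ℝ) : ℂ) * p t
          + a t * conj (b t) ∧
      Complex.I * deriv b t =
        ((Ntr p b a t + Etr p b a t : ℝ) : ℂ) * b t
          + (Etr p b a t : ℂ) * a t * conj (p t) ∧
      Complex.I * deriv a t =
        ((Ntr p b a t - Etr p b a t : ℝ) : ℂ) * a t
          - ((Etr p b a t * ‖p t‖ ^ 2 : ℝ) : ℂ) * b t * p t) :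
    HasDerivAt (Str p b a) 0 t := by
  have hD : (1 - p t * conj (p t)) ≠ 0 := by
    rw [← cnorm_sq]
    norm_cast
    have := norm_nonneg (p t)
    nlinarith
  have key : ∀ z w : ℂ, Complex.I * z = w → z = -Complex.I * w := by
    intro z w h
    rw [← h, ← mul_assoc]; simp
  obtain ⟨h1, h2, h3⟩ := hode
  have h1 := key _ _ h1
  have h2 := key _ _ h2
  have h3 := key _ _ h3
  have g1 := congrArg conj h1
  have g2 := congrArg conj h2
  have g3 := congrArg conj h3
  simp only [map_mul, map_add, map_sub, map_neg, Complex.conj_I, Complex.conj_ofReal,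
    Complex.conj_conj] at g1 g2 g3
  push_cast at h1 h2 h3 g1 g2 g3
  rw [cnorm_sq] at h1 h3 g1 g3
  have dp := hp.hasDerivAt
  have db := hb.hasDerivAt
  have da := ha.hasDerivAt
  have dP : HasDerivAt (fun s => conj (p s)) (conj (deriv p t)) t := dp.star
  have dB : HasDerivAt (fun s => conj (b s)) (conj (deriv b t)) t := db.star
  have dA : HasDerivAt (fun s => conj (a s)) (conj (deriv a t)) t := da.star
  have hN := Ntr_c p b a t
  have hE : ((Etr p b a t : ℝ) : ℂ) * (1 - p t * conj (p t)) ^ 2 =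
    ((b t * p t + a t) * (conj (b t) * conj (p t) + conj (a t))) := by
    rw [Etr_c]; field_simp
  have dE : HasDerivAt (fun s => ((Etr p b a s : ℝ) : ℂ)) 0 t := by
    have := (((db.mul dp).add da).mul ((dB.mul dP).add dA)).div
      (((dp.mul dP).const_sub 1).pow 2) (pow_ne_zero 2 hD)
    refine (this.congr_deriv ?_).congr_of_eventuallyEq
      (Filter.Eventually.of_forall fun s => Etr_c p b a s)
    simp only [Pi.mul_apply, Pi.add_apply, Pi.pow_apply]
    rw [div_eq_zero_iff]
    left
    rw [← hE, g1, g2, g3, h1, h2, h3]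
    generalize ((Etr p b a t : ℝ) : ℂ) = E at *
    generalize ((Ntr p b a t : ℝ) : ℂ) = N at *
    generalize conj (p t) = P at *
    generalize conj (b t) = B at *
    generalize conj (a t) = A at *
    generalize p t = p at *
    generalize b t = b at *
    generalize a t = a at *
    subst hN
    push_cast
    ring
  have dN : HasDerivAt (fun s => ((Ntr p b a s : ℝ) : ℂ)) 0 t := by
    have := (db.mul dB).add (((dp.mul dP).const_sub 1).mul dE)
    refine (this.congr_deriv ?_).congr_of_eventuallyEq
      (Filter.Eventually.of_forall fun s => Ntr_c p b a s)
    simp only [Pi.mul_apply, Pi.add_apply, Pi.pow_apply]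
    rw [g1, g2, h1, h2]
    ring
  have := (((dN.add dE).mul (dp.mul dP)).add ((dE.div_const 2).mul ((dp.mul dP).pow 2))).add
    (((da.mul dB).mul dP).add ((dA.mul db).mul dp))
  refine (this.congr_deriv ?_).congr_of_eventuallyEq
    (Filter.Eventually.of_forall fun s => Str_c p b a s)
  simp only [Pi.mul_apply, Pi.add_apply, Pi.pow_apply]
  rw [g1, g2, g3, h1, h2, h3]
  push_cast
  ring

/-- Along solutions of the truncated Szegő `L(1)` ODE system on an interval `I`,
the quantity `S = (N+E)|p|² + (E/2)|p|⁴ + (a conj(b) conj(p) + conj(a) b p)`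
is constant. -/
theorem truncated_szego_L1_S_conserved (I : Set ℝ) (hI : I.OrdConnected)
    (p b a : ℝ → ℂ)
    (hp : ∀ t ∈ I, DifferentiableAt ℝ p t)
    (hb : ∀ t ∈ I, DifferentiableAt ℝ b t)
    (ha : ∀ t ∈ I, DifferentiableAt ℝ a t)
    (hp1 : ∀ t ∈ I, ‖p t‖ < 1)
    (hode : ∀ t ∈ I,
      Complex.I * deriv p t =
        ((Ntr p b a t - (1 - ‖p t‖ ^ 2) * Etr p b a t : ℝ) : ℂ) * p t
          + a t * conj (b t) ∧
      Complex.I * deriv b t =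
        ((Ntr p b a t + Etr p b a t : ℝ) : ℂ) * b t
          + (Etr p b a t : ℂ) * a t * conj (p t) ∧
      Complex.I * deriv a t =
        ((Ntr p b a t - Etr p b a t : ℝ) : ℂ) * a t
          - ((Etr p b a t * ‖p t‖ ^ 2 : ℝ) : ℂ) * b t * p t) :
    ∀ t ∈ I, ∀ t' ∈ I, Str p b a t = Str p b a t' := by
  intro t ht t' ht'
  have h := (hI.convex).norm_image_sub_le_of_norm_hasDerivWithin_le (f := Str p b a)
    (f' := fun _ => 0) (C := 0)
    (fun s hs => (Str_deriv p b a s (hp s hs) (hb s hs) (ha s hs) (hp1 s hs)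
      (hode s hs)).hasDerivWithinAt) (by simp) ht' ht
  rw [zero_mul] at h
  exact sub_eq_zero.mp (norm_le_zero_iff.mp h)
end

section
/- Let b, a, p ∈ ℂ with |p| < 1, and define α_0 = b, α_n = (bp+a)p^{n−1} for n ≥ 1, E = |bp+a|²/(1−|p|²)², N = |b|² + (1−|p|²)E, and S = (N+E)|p|² + (E/2)|p|⁴ + 2Re(a·conj(b)·conj(p)). Then the truncated Szegő Hamiltonian evaluated on this sequence, H_tr = |α_0|⁴/4 + |α_0|²·Σ_{n=1}^∞ |α_n|² + Re( Σ_{n=2}^∞ Σ_{k=1}^{n−1} conj(α_0)·conj(α_n)·α_k·α_{n−k} ), equals (1/4)(N² + 2EN − 3E² + 2ES). -/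
open ComplexConjugate

/-- On the manifold `L(1)` (`α₀ = b`, `α_n = (bp+a)p^{n-1}` for `n ≥ 1`, `|p| < 1`),
the truncated Szegő Hamiltonian
`H_tr = |α₀|⁴/4 + |α₀|² Σ_{n≥1}|α_n|²
  + Re( Σ_{n≥2} Σ_{k=1}^{n-1} conj(α₀) conj(α_n) α_k α_{n-k} )`
equals `(1/4)(N² + 2EN - 3E² + 2ES)`.
(The outer series is indexed by `m = n - 2`, the inner by `j = k - 1`.) -/
theorem truncated_szego_hamiltonian_on_L1 (b a p : ℂ) (hp : ‖p‖ < 1) (E N S : ℝ)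
    (hE : E = ‖b * p + a‖ ^ 2 / (1 - ‖p‖ ^ 2) ^ 2)
    (hN : N = ‖b‖ ^ 2 + (1 - ‖p‖ ^ 2) * E)
    (hS : S = (N + E) * ‖p‖ ^ 2 + (E / 2) * ‖p‖ ^ 4 + 2 * (a * conj b * conj p).re) :
    ‖b‖ ^ 4 / 4 + ‖b‖ ^ 2 * (∑' n : ℕ, ‖(b * p + a) * p ^ n‖ ^ 2)
      + (∑' m : ℕ, ∑ j ∈ Finset.range (m + 1),
          conj b * conj ((b * p + a) * p ^ (m + 1))
            * ((b * p + a) * p ^ j) * ((b * p + a) * p ^ (m - j))).re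
      = (1 / 4) * (N ^ 2 + 2 * E * N - 3 * E ^ 2 + 2 * E * S) := by
  have hx0 : 0 ≤ ‖p‖ ^ 2 := by positivity
  have hx1 : ‖p‖ ^ 2 < 1 := by nlinarith [norm_nonneg p]
  have hne : (1 - ‖p‖ ^ 2) ≠ 0 := by linarith
  have h1 : (∑' n : ℕ, ‖(b * p + a) * p ^ n‖ ^ 2) = E * (1 - ‖p‖ ^ 2) := by
    have : ∀ n : ℕ, ‖(b * p + a) * p ^ n‖ ^ 2 = ‖b * p + a‖ ^ 2 * (‖p‖ ^ 2) ^ n := by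
      intro n
      rw [norm_mul, norm_pow]
      ring
    simp_rw [this]
    rw [tsum_mul_left, tsum_geometric_of_lt_one hx0 hx1, hE]
    field_simp
  have hc : ∀ z : ℂ, conj z * z = ((‖z‖ ^ 2 : ℝ) : ℂ) := by
    intro z
    rw [Complex.conj_mul']
    push_cast
    rfl
  have h2 : (∑' m : ℕ, ∑ j ∈ Finset.range (m + 1),
          conj b * conj ((b * p + a) * p ^ (m + 1))
            * ((b * p + a) * p ^ j) * ((b * p + a) * p ^ (m - j)))
      = (E : ℂ) * (conj b * conj p * (b * p + a)) := by
    have hterm : ∀ m : ℕ, (∑ j ∈ Finset.range (m + 1),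
          conj b * conj ((b * p + a) * p ^ (m + 1))
            * ((b * p + a) * p ^ j) * ((b * p + a) * p ^ (m - j)))
        = (conj b * conj p * (b * p + a) * ((‖b * p + a‖ ^ 2 : ℝ) : ℂ)) *
          (((m + 1).choose 1 : ℕ) * ((‖p‖ ^ 2 : ℝ) : ℂ) ^ m) := by
      intro m
      have : ∀ j ∈ Finset.range (m + 1), conj b * conj ((b * p + a) * p ^ (m + 1))
            * ((b * p + a) * p ^ j) * ((b * p + a) * p ^ (m - j))
          = (conj b * conj p * (b * p + a) * ((‖b * p + a‖ ^ 2 : ℝ) : ℂ)) *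
            ((‖p‖ ^ 2 : ℝ) : ℂ) ^ m := by
        intro j hj
        have hpm : p ^ m = p ^ j * p ^ (m - j) := by
          rw [← pow_add, Nat.add_sub_cancel' (Nat.lt_succ_iff.mp (Finset.mem_range.mp hj))]
        rw [← hc, ← hc, mul_pow, hpm, map_mul, map_pow]
        ring
      rw [Finset.sum_congr rfl this, Finset.sum_const, Finset.card_range, Nat.choose_one_right,
        nsmul_eq_mul]
      ring
    simp_rw [hterm]
    have hn : ‖((‖p‖ ^ 2 : ℝ) : ℂ)‖ < 1 := by
      rw [Complex.norm_real, Real.norm_of_nonneg hx0]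
      exact hx1
    rw [tsum_mul_left, tsum_choose_mul_geometric_of_norm_lt_one 1 hn, hE]
    push_cast
    ring
  have h3 : conj b * conj p * (b * p + a)
      = ((‖b‖ ^ 2 * ‖p‖ ^ 2 : ℝ) : ℂ) + a * conj b * conj p := by
    rw [Complex.ofReal_mul, ← hc, ← hc]
    ring
  rw [h1, h2, h3, Complex.re_ofReal_mul, Complex.add_re, Complex.ofReal_re, hS, hN]
  ring
end

section
/- Let b, a, p ∈ ℂ with |p| < 1, and define E = |bp+a|²/(1−|p|²)², N = |b|² + (1−|p|²)E, S = (N+E)|p|² + (E/2)|p|⁴ + 2Re(a·conj(b)·conj(p)). Then one has the identity (1−|p|²)·(3E − 2(N+S)) = (1+|p|²)·|bp+a|² − 2·|b + a·conj(p)|². In particular, since |p| < 1, the condition 3E − 2(N+S) = 0 (i.e. V_eff(1) = 0 for the effective potential of the truncated Szegő L(1) dynamics) holds if and only if 2|b + a·conj(p)|² = (1+|p|²)|bp+a|². -/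
open ComplexConjugate

/-- Identity `(1-|p|²)(3E - 2(N+S)) = (1+|p|²)|bp+a|² - 2|b + a conj(p)|²` on `L(1)`,
and the resulting characterization of the turbulence condition `3E - 2(N+S) = 0`. -/
theorem turbulence_condition_characterization (b a p : ℂ) (hp : ‖p‖ < 1) (E N S : ℝ)
    (hE : E = ‖b * p + a‖ ^ 2 / (1 - ‖p‖ ^ 2) ^ 2)
    (hN : N = ‖b‖ ^ 2 + (1 - ‖p‖ ^ 2) * E)
    (hS : S = (N + E) * ‖p‖ ^ 2 + (E / 2) * ‖p‖ ^ 4 + 2 * (a * conj b * conj p).re) :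
    (1 - ‖p‖ ^ 2) * (3 * E - 2 * (N + S))
        = (1 + ‖p‖ ^ 2) * ‖b * p + a‖ ^ 2 - 2 * ‖b + a * conj p‖ ^ 2
      ∧ (3 * E - 2 * (N + S) = 0 ↔
          2 * ‖b + a * conj p‖ ^ 2 = (1 + ‖p‖ ^ 2) * ‖b * p + a‖ ^ 2) := by
  have hx : 0 < 1 - ‖p‖ ^ 2 := by nlinarith [norm_nonneg p]
  have hEA : E * (1 - ‖p‖ ^ 2) ^ 2 = ‖b * p + a‖ ^ 2 := by
    rw [hE]; field_simp
  have h1 : ‖b * p + a‖ ^ 2 = ‖b‖ ^ 2 * ‖p‖ ^ 2 + ‖a‖ ^ 2 + 2 * (a * conj b * conj p).re := by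
    simp only [← Complex.normSq_eq_norm_sq, Complex.normSq_apply]
    simp
    ring
  have h2 : ‖b + a * conj p‖ ^ 2 = ‖b‖ ^ 2 + ‖a‖ ^ 2 * ‖p‖ ^ 2 + 2 * (a * conj b * conj p).re := by
    simp only [← Complex.normSq_eq_norm_sq, Complex.normSq_apply]
    simp
    ring
  have key : (1 - ‖p‖ ^ 2) * (3 * E - 2 * (N + S))
        = (1 + ‖p‖ ^ 2) * ‖b * p + a‖ ^ 2 - 2 * ‖b + a * conj p‖ ^ 2 := by
    rw [h1] at hEA
    rw [h1, h2, hS, hN]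
    linear_combination (1 - ‖p‖ ^ 2) * hEA
  refine ⟨key, fun h => ?_, fun h => ?_⟩
  · rw [h] at key
    linarith
  · have h0 : (1 - ‖p‖ ^ 2) * (3 * E - 2 * (N + S)) = 0 := by rw [key]; linarith
    exact (mul_eq_zero.mp h0).resolve_left hx.ne'
end

section
/- Let b, p ∈ ℂ with p ≠ 0, let λ ∈ ℝ, and set a := b·p·(1 − e^{iλ}·√(2(1 + 1/|p|²))). Then 2·|b + a·conj(p)|² = (1+|p|²)·|bp + a|². -/
open ComplexConjugate

/-- The explicit family `a = b p (1 - e^{iλ} √(2(1 + 1/|p|²)))` solves the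
turbulence condition `2|b + a conj(p)|² = (1+|p|²)|bp+a|²`. -/
theorem explicit_turbulent_data (b p : ℂ) (hp : p ≠ 0) (lam : ℝ)
    (a : ℂ)
    (ha : a = b * p * (1 - Complex.exp (Complex.I * (lam : ℂ))
        * ((Real.sqrt (2 * (1 + 1 / ‖p‖ ^ 2)) : ℝ) : ℂ))) :
    2 * ‖b + a * conj p‖ ^ 2 = (1 + ‖p‖ ^ 2) * ‖b * p + a‖ ^ 2 := by
  have hr : 0 < ‖p‖ ^ 2 := by positivity
  have hs : Real.sqrt (2 * (1 + 1 / ‖p‖ ^ 2)) ^ 2 = 2 * (1 + 1 / ‖p‖ ^ 2) :=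
    Real.sq_sqrt (by positivity)
  have hpp : p * conj p = ((‖p‖ ^ 2 : ℝ) : ℂ) := by
    rw [Complex.mul_conj, Complex.normSq_eq_norm_sq]
  generalize Real.sqrt (2 * (1 + 1 / ‖p‖ ^ 2)) = s at *
  have he : ‖Complex.exp (Complex.I * (lam : ℂ))‖ ^ 2 = 1 := by
    rw [mul_comm, Complex.norm_exp_ofReal_mul_I]; norm_num
  generalize Complex.exp (Complex.I * (lam : ℂ)) = e at *
  have h1 : b + a * conj p = b * (1 + ((‖p‖ ^ 2 : ℝ) : ℂ) * (1 - e * s)) := by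
    rw [ha, ← hpp]; ring
  have h2 : b * p + a = b * p * (2 - e * s) := by rw [ha]; ring
  rw [h1, h2]
  simp only [norm_mul, mul_pow]
  generalize ‖p‖ ^ 2 = r at *
  have hrs : r * s ^ 2 = 2 * (r + 1) := by
    rw [hs]; field_simp
  rw [← Complex.normSq_eq_norm_sq] at he
  simp only [← Complex.normSq_eq_norm_sq (1 + _), ← Complex.normSq_eq_norm_sq (2 - _)]
  simp only [Complex.normSq_apply] at he ⊢
  simp
  linear_combination (‖b‖ ^ 2 * (2 * r ^ 2 * s ^ 2 - (1 + r) * r * s ^ 2)) * he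
    + (‖b‖ ^ 2 * (2 * r - (1 + r))) * hrs
end

section
/- Let K > 0, let c, x₀ ∈ ℝ with c < x₀ and 0 ≤ x₀ < 1, let φ ∈ ℝ, and set ω := √(K(1−c)(1−x₀)). Define x(t) := [ (c−x₀)·cosh(ωt+φ) − c − x₀ + 2cx₀ ] / [ (c−x₀)·cosh(ωt+φ) + c + x₀ − 2 ]. Then the denominator (c−x₀)cosh(ωt+φ) + c + x₀ − 2 is strictly negative for every t ∈ ℝ, and x is differentiable with x'(t)² = K·(1−x(t))²·(x(t)−x₀)·(x(t)−c) for all t ∈ ℝ. -/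
/-- The explicit function
`x(t) = [(c-x₀)cosh(ωt+φ) - c - x₀ + 2cx₀] / [(c-x₀)cosh(ωt+φ) + c + x₀ - 2]`,
with `ω = √(K(1-c)(1-x₀))`, has everywhere strictly negative denominator and solves
`x'² = K (1-x)² (x-x₀)(x-c)`. -/
theorem explicit_solution_effective_potential (K c x₀ φ : ℝ)
    (hK : 0 < K) (hcx : c < x₀) (hx0 : 0 ≤ x₀) (hx1 : x₀ < 1) :
    (∀ t : ℝ, (c - x₀) * Real.cosh (Real.sqrt (K * (1 - c) * (1 - x₀)) * t + φ)
        + c + x₀ - 2 < 0)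
    ∧ Differentiable ℝ (fun t : ℝ =>
        ((c - x₀) * Real.cosh (Real.sqrt (K * (1 - c) * (1 - x₀)) * t + φ)
            - c - x₀ + 2 * c * x₀)
          / ((c - x₀) * Real.cosh (Real.sqrt (K * (1 - c) * (1 - x₀)) * t + φ)
            + c + x₀ - 2))
    ∧ ∀ t : ℝ,
        (deriv (fun t : ℝ =>
          ((c - x₀) * Real.cosh (Real.sqrt (K * (1 - c) * (1 - x₀)) * t + φ)
              - c - x₀ + 2 * c * x₀)
            / ((c - x₀) * Real.cosh (Real.sqrt (K * (1 - c) * (1 - x₀)) * t + φ)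
              + c + x₀ - 2)) t) ^ 2
        = K * (1 - (((c - x₀) * Real.cosh (Real.sqrt (K * (1 - c) * (1 - x₀)) * t + φ)
              - c - x₀ + 2 * c * x₀)
            / ((c - x₀) * Real.cosh (Real.sqrt (K * (1 - c) * (1 - x₀)) * t + φ)
              + c + x₀ - 2))) ^ 2
          * ((((c - x₀) * Real.cosh (Real.sqrt (K * (1 - c) * (1 - x₀)) * t + φ)
              - c - x₀ + 2 * c * x₀)
            / ((c - x₀) * Real.cosh (Real.sqrt (K * (1 - c) * (1 - x₀)) * t + φ)
              + c + x₀ - 2)) - x₀)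
          * ((((c - x₀) * Real.cosh (Real.sqrt (K * (1 - c) * (1 - x₀)) * t + φ)
              - c - x₀ + 2 * c * x₀)
            / ((c - x₀) * Real.cosh (Real.sqrt (K * (1 - c) * (1 - x₀)) * t + φ)
              + c + x₀ - 2)) - c) := by
  have hP : 0 ≤ K * (1 - c) * (1 - x₀) := by
    have h1 : 0 < 1 - c := by linarith
    have h2 : 0 < 1 - x₀ := by linarith
    positivity
  have hw := Real.sq_sqrt hP
  generalize Real.sqrt (K * (1 - c) * (1 - x₀)) = w at *
  have hneg : ∀ t : ℝ, (c - x₀) * Real.cosh (w * t + φ) + c + x₀ - 2 < 0 := by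
    intro t
    nlinarith [Real.one_le_cosh (w * t + φ)]
  have hd : ∀ t : ℝ, HasDerivAt (fun t : ℝ =>
        ((c - x₀) * Real.cosh (w * t + φ) - c - x₀ + 2 * c * x₀)
          / ((c - x₀) * Real.cosh (w * t + φ) + c + x₀ - 2))
      (((c - x₀) * (Real.sinh (w * t + φ) * w) * ((c - x₀) * Real.cosh (w * t + φ) + c + x₀ - 2)
        - ((c - x₀) * Real.cosh (w * t + φ) - c - x₀ + 2 * c * x₀)
          * ((c - x₀) * (Real.sinh (w * t + φ) * w)))
        / ((c - x₀) * Real.cosh (w * t + φ) + c + x₀ - 2) ^ 2) t := by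
    intro t
    have h0 : HasDerivAt (fun t : ℝ => w * t + φ) w t := by
      simpa using ((hasDerivAt_id t).const_mul w).add_const φ
    have h1 := h0.cosh.const_mul (c - x₀)
    exact (((h1.sub_const c).sub_const x₀).add_const (2 * c * x₀)).div
      (((h1.add_const c).add_const x₀).sub_const 2) (hneg t).ne
  refine ⟨hneg, fun t => (hd t).differentiableAt, fun t => ?_⟩
  rw [(hd t).deriv]
  have hD := (hneg t).ne
  have hS := Real.sinh_sq (w * t + φ)
  generalize Real.sinh (w * t + φ) = S at *
  generalize Real.cosh (w * t + φ) = C at *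
  obtain ⟨D, hDe⟩ : ∃ D, D = (c - x₀) * C + c + x₀ - 2 := ⟨_, rfl⟩
  obtain ⟨N, hN⟩ : ∃ N, N = (c - x₀) * C - c - x₀ + 2 * c * x₀ := ⟨_, rfl⟩
  rw [← hDe] at hD
  rw [← hDe, ← hN]
  have e1 : D - N = -2 * ((1 - c) * (1 - x₀)) := by rw [hDe, hN]; ring
  have e2 : N - x₀ * D = (c - x₀) * (1 - x₀) * (C - 1) := by rw [hDe, hN]; ring
  have e3 : N - c * D = (c - x₀) * (1 - c) * (C + 1) := by rw [hDe, hN]; ring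
  have f1 : 1 - N / D = (D - N) / D := by field_simp
  have f2 : N / D - x₀ = (N - x₀ * D) / D := by field_simp
  have f3 : N / D - c = (N - c * D) / D := by field_simp
  have f4 : (c - x₀) * (S * w) * D - N * ((c - x₀) * (S * w))
      = (c - x₀) * (S * w) * (D - N) := by ring
  rw [f1, f2, f3, f4, e1, e2, e3]
  have g : ((c - x₀) * (S * w) * (-2 * ((1 - c) * (1 - x₀)))) ^ 2
      = K * (-2 * ((1 - c) * (1 - x₀))) ^ 2 * ((c - x₀) * (1 - x₀) * (C - 1))
        * ((c - x₀) * (1 - c) * (C + 1)) := by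
    have : ((c - x₀) * (S * w) * (-2 * ((1 - c) * (1 - x₀)))) ^ 2
      = (c - x₀) ^ 2 * S ^ 2 * w ^ 2 * (-2 * ((1 - c) * (1 - x₀))) ^ 2 := by ring
    rw [this, hS, hw]; ring
  rw [div_pow, g, div_pow]
  generalize (-2 * ((1 - c) * (1 - x₀))) ^ 2 = A
  field_simp
end

section
/- Let K > 0, c < x₀, 0 ≤ x₀ < 1, φ ∈ ℝ, ω := √(K(1−c)(1−x₀)), and x(t) := [ (c−x₀)·cosh(ωt+φ) − c − x₀ + 2cx₀ ] / [ (c−x₀)·cosh(ωt+φ) + c + x₀ − 2 ]. Then lim_{t→∞} e^{ωt}·(1 − x(t)) = 4(1−c)(1−x₀)·e^{−φ}/(x₀ − c). In particular 1 − x(t) decays exponentially, i.e. x(t) → 1 as t → ∞ at the exponential rate ω. -/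
open Filter Topology

/-- For the explicit solution
`x(t) = [(c-x₀)cosh(ωt+φ) - c - x₀ + 2cx₀] / [(c-x₀)cosh(ωt+φ) + c + x₀ - 2]`,
with `ω = √(K(1-c)(1-x₀))`, one has
`e^{ωt}(1 - x(t)) → 4(1-c)(1-x₀)e^{-φ}/(x₀-c)` as `t → ∞`; in particular
`x(t) → 1` exponentially fast. -/
theorem explicit_solution_exponential_approach (K c x₀ φ : ℝ)
    (hK : 0 < K) (hcx : c < x₀) (hx0 : 0 ≤ x₀) (hx1 : x₀ < 1) :
    Tendsto (fun t : ℝ =>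
        Real.exp (Real.sqrt (K * (1 - c) * (1 - x₀)) * t)
          * (1 - ((c - x₀) * Real.cosh (Real.sqrt (K * (1 - c) * (1 - x₀)) * t + φ)
              - c - x₀ + 2 * c * x₀)
            / ((c - x₀) * Real.cosh (Real.sqrt (K * (1 - c) * (1 - x₀)) * t + φ)
              + c + x₀ - 2)))
      atTop (𝓝 (4 * (1 - c) * (1 - x₀) * Real.exp (-φ) / (x₀ - c)))
    ∧ Tendsto (fun t : ℝ =>
        ((c - x₀) * Real.cosh (Real.sqrt (K * (1 - c) * (1 - x₀)) * t + φ)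
            - c - x₀ + 2 * c * x₀)
          / ((c - x₀) * Real.cosh (Real.sqrt (K * (1 - c) * (1 - x₀)) * t + φ)
            + c + x₀ - 2))
      atTop (𝓝 1) := by
  have hω : 0 < Real.sqrt (K * (1 - c) * (1 - x₀)) := by
    apply Real.sqrt_pos.2
    have h1 : 0 < 1 - c := by linarith
    have h2 : 0 < 1 - x₀ := by linarith
    positivity
  generalize Real.sqrt (K * (1 - c) * (1 - x₀)) = w at hω ⊢
  have hD : ∀ t : ℝ, (c - x₀) * Real.cosh (w * t + φ) + c + x₀ - 2 < 0 := by
    intro t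
    have := mul_pos (sub_pos.2 hcx) (Real.cosh_pos (w * t + φ))
    nlinarith
  have hE : Tendsto (fun t : ℝ => Real.exp (-(w * t))) atTop (𝓝 0) :=
    Real.tendsto_exp_neg_atTop_nhds_zero.comp (tendsto_id.const_mul_atTop hω)
  have hx : x₀ - c ≠ 0 := (sub_pos.2 hcx).ne'
  have hden : Tendsto (fun t : ℝ => (x₀ - c) * (Real.exp φ + Real.exp (-φ)
      * Real.exp (-(w * t)) ^ 2) / 2 + (2 - c - x₀) * Real.exp (-(w * t))) atTop
      (𝓝 ((x₀ - c) * (Real.exp φ + Real.exp (-φ) * 0 ^ 2) / 2 + (2 - c - x₀) * 0)) :=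
    ((((hE.pow 2).const_mul _).const_add _).const_mul _ |>.div_const 2).add (hE.const_mul _)
  have hF : Tendsto (fun t : ℝ => Real.exp (w * t)
          * (1 - ((c - x₀) * Real.cosh (w * t + φ) - c - x₀ + 2 * c * x₀)
            / ((c - x₀) * Real.cosh (w * t + φ) + c + x₀ - 2)))
      atTop (𝓝 (4 * (1 - c) * (1 - x₀) * Real.exp (-φ) / (x₀ - c))) := by
    have hne : (x₀ - c) * (Real.exp φ + Real.exp (-φ) * 0 ^ 2) / 2 + (2 - c - x₀) * 0 ≠ 0 := by
      have := Real.exp_ne_zero φ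
      simp [hx]
    have h := (tendsto_const_nhds (x := 2 * (1 - c) * (1 - x₀))).div hden hne
    have hl : 2 * (1 - c) * (1 - x₀) / ((x₀ - c) * (Real.exp φ + Real.exp (-φ) * 0 ^ 2) / 2
        + (2 - c - x₀) * 0) = 4 * (1 - c) * (1 - x₀) * Real.exp (-φ) / (x₀ - c) := by
      have := Real.exp_ne_zero φ
      rw [Real.exp_neg]
      simp only [ne_eq, OfNat.ofNat_ne_zero, not_false_eq_true, zero_pow, mul_zero, add_zero]
      field_simp
      ring
    rw [hl] at h
    refine h.congr fun t => ?_
    have hd := (hD t).ne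
    have h1 : (x₀ - c) * (Real.exp φ + Real.exp (-φ) * Real.exp (-(w * t)) ^ 2) / 2
        + (2 - c - x₀) * Real.exp (-(w * t))
        = -((c - x₀) * Real.cosh (w * t + φ) + c + x₀ - 2) * Real.exp (-(w * t)) := by
      rw [Real.cosh_eq, neg_add, Real.exp_add, Real.exp_add, Real.exp_neg (w * t)]
      have := Real.exp_ne_zero (w * t)
      field_simp
      ring
    simp only [Pi.div_apply]
    rw [h1, one_sub_div hd, Real.exp_neg]
    have := Real.exp_ne_zero (w * t)
    generalize Real.cosh (w * t + φ) = C at hd ⊢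
    rw [mul_div_assoc', div_eq_div_iff (mul_ne_zero (neg_ne_zero.2 hd) (inv_ne_zero this)) hd]
    field_simp
    ring
  refine ⟨hF, ?_⟩
  have h2 := (hE.mul hF).const_sub 1
  rw [zero_mul, sub_zero] at h2
  refine h2.congr fun t => ?_
  rw [← mul_assoc, ← Real.exp_add, neg_add_cancel, Real.exp_zero]
  ring
end

section
/- Let 0 ≤ x₀ < 1 and c̃ > 0, and define x(t) := (c̃t² + x₀)/(c̃t² + 1). Then for all t ∈ ℝ: (i) x'(t)² = (4c̃/(1−x₀)²)·(1−x(t))³·(x(t)−x₀), and (ii) 1 − x(t) = (1−x₀)/(1 + c̃t²); in particular lim_{t→∞} t²·(1−x(t)) = (1−x₀)/c̃, so x(t) → 1 at a polynomial (quadratic) rate. -/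
open Filter Topology

/-- The rational function `x(t) = (c̃t² + x₀)/(c̃t² + 1)` satisfies
`x'² = (4c̃/(1-x₀)²)(1-x)³(x-x₀)` and `1 - x(t) = (1-x₀)/(1 + c̃t²)`, and
`t²(1-x(t)) → (1-x₀)/c̃` as `t → ∞`: `x → 1` at a quadratic rate. -/
theorem explicit_polynomial_solution (x₀ ctil : ℝ) (hx0 : 0 ≤ x₀) (hx1 : x₀ < 1)
    (hc : 0 < ctil) :
    (∀ t : ℝ,
      (deriv (fun t : ℝ => (ctil * t ^ 2 + x₀) / (ctil * t ^ 2 + 1)) t) ^ 2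
        = (4 * ctil / (1 - x₀) ^ 2)
          * (1 - (ctil * t ^ 2 + x₀) / (ctil * t ^ 2 + 1)) ^ 3
          * ((ctil * t ^ 2 + x₀) / (ctil * t ^ 2 + 1) - x₀))
    ∧ (∀ t : ℝ,
      1 - (ctil * t ^ 2 + x₀) / (ctil * t ^ 2 + 1) = (1 - x₀) / (1 + ctil * t ^ 2))
    ∧ Tendsto (fun t : ℝ =>
        t ^ 2 * (1 - (ctil * t ^ 2 + x₀) / (ctil * t ^ 2 + 1)))
      atTop (𝓝 ((1 - x₀) / ctil)) := by
  have hD : ∀ t : ℝ, ctil * t ^ 2 + 1 ≠ 0 := fun t => by positivity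
  have hx : 1 - x₀ ≠ 0 := by linarith
  have h2 : ∀ t : ℝ,
      1 - (ctil * t ^ 2 + x₀) / (ctil * t ^ 2 + 1) = (1 - x₀) / (ctil * t ^ 2 + 1) := by
    intro t
    have := hD t
    rw [eq_div_iff this, sub_mul, div_mul_cancel₀ _ this]
    ring
  refine ⟨?_, ?_, ?_⟩
  · intro t
    have hDt := hD t
    have hp : HasDerivAt (fun t : ℝ => ctil * t ^ 2) (ctil * (2 * t)) t := by
      simpa using (hasDerivAt_pow 2 t).const_mul ctil
    have hd : deriv (fun t : ℝ => (ctil * t ^ 2 + x₀) / (ctil * t ^ 2 + 1)) t = _ :=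
      ((hp.add_const x₀).fun_div (hp.add_const 1) hDt).deriv
    have h3 : (ctil * t ^ 2 + x₀) / (ctil * t ^ 2 + 1) - x₀
        = ctil * t ^ 2 * (1 - x₀) / (ctil * t ^ 2 + 1) := by
      rw [eq_div_iff hDt, sub_mul, div_mul_cancel₀ _ hDt]
      ring
    rw [hd, h2, h3]
    generalize hE : ctil * t ^ 2 + 1 = D at *
    field_simp
    subst hE
    ring
  · intro t
    rw [h2, add_comm]
  · have hlim : Tendsto (fun t : ℝ => ctil * t ^ 2 + 1) atTop atTop :=
      tendsto_atTop_add_const_right _ _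
        ((tendsto_pow_atTop (two_ne_zero)).const_mul_atTop hc)
    have h4 : Tendsto (fun t : ℝ => (1 - x₀) / ctil - (1 - x₀) / ctil * (ctil * t ^ 2 + 1)⁻¹)
        atTop (𝓝 ((1 - x₀) / ctil - (1 - x₀) / ctil * 0)) :=
      tendsto_const_nhds.sub (hlim.inv_tendsto_atTop.const_mul _)
    rw [mul_zero, sub_zero] at h4
    refine h4.congr fun t => ?_
    rw [h2]
    have := hD t
    field_simp
    ring
end

section
/- Let β ∈ ℝ, let I ⊆ ℝ be an interval, and let p, b, a : I → ℂ be differentiable with |p(t)| < 1 for all t ∈ I, satisfying i p' = (N − β(1−|p|²)E)p + a·conj(b), i b' = (N+E)b + E·a·conj(p), i a' = (N − βE)a − βE|p|²·b·p, where E(t) = |b(t)p(t)+a(t)|²/(1−|p(t)|²)² and N(t) = |b(t)|² + (1−|p(t)|²)E(t). Define α_0(t) = b(t) and α_n(t) = (b(t)p(t)+a(t))·p(t)^{n−1} for n ≥ 1. Then α solves the β-Szegő equation: i·α_0'(t) = Σ_{m=0}^∞ Σ_{k=0}^m conj(α_m)·α_k·α_{m−k}, and for every n ≥ 1, i·α_n'(t)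 = Σ_{m=0}^∞ Σ_{k=0}^{n+m} conj(α_m)·α_k·α_{n+m−k} − β·Σ_{m=1}^∞ Σ_{k=1}^{n+m−1} conj(α_m)·α_k·α_{n+m−k} (all series converging absolutely since |p| < 1). -/
open ComplexConjugate

theorem inner_pos (A : ℕ → ℂ) (c p : ℂ) (hA : ∀ n, A (n + 1) = c * p ^ n) (z : ℂ) (M : ℕ) :
    ∑ k ∈ Finset.Icc 1 M, z * A k * A (M + 1 - k) = z * (M * c ^ 2 * p ^ (M - 1)) := by
  have : ∀ k ∈ Finset.Icc 1 M, z * A k * A (M + 1 - k) = z * (c ^ 2 * p ^ (M - 1)) := by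
    intro k hk
    rw [Finset.mem_Icc] at hk
    obtain ⟨i, rfl⟩ : ∃ i, k = i + 1 := ⟨k - 1, by omega⟩
    obtain ⟨j, rfl⟩ : ∃ j, M = i + 1 + j := ⟨M - (i + 1), by omega⟩
    have e1 : i + 1 + j + 1 - (i + 1) = j + 1 := by omega
    have e2 : i + 1 + j - 1 = i + j := by omega
    rw [e1, e2, hA, hA]
    ring
  rw [Finset.sum_congr rfl this]
  simp
  ring

theorem inner_full (A : ℕ → ℂ) (b c p : ℂ) (h0 : A 0 = b) (hA : ∀ n, A (n + 1) = c * p ^ n)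
    (z : ℂ) (M : ℕ) :
    ∑ k ∈ Finset.range (M + 1 + 1), z * A k * A (M + 1 - k)
      = z * (2 * b * c * p ^ M + M * c ^ 2 * p ^ (M - 1)) := by
  rw [Finset.sum_range_succ, Finset.sum_range_succ']
  have := inner_pos A c p hA z M
  rw [← Finset.sum_image (s := Finset.range M) (g := fun k => k + 1)
    (f := fun k => z * A k * A (M + 1 - k)) (by intro x _ y _ h; simpa using h)]
  have e : (Finset.range M).image (fun k => k + 1) = Finset.Icc 1 M := by
    ext k
    simp only [Finset.mem_image, Finset.mem_range, Finset.mem_Icc]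
    constructor
    · rintro ⟨i, hi, rfl⟩
      omega
    · intro h
      exact ⟨k - 1, by omega, by omega⟩
  rw [e, this]
  simp [h0, hA]
  ring

theorem hs_congr_s18 {f g : ℕ → ℂ} {x y : ℂ} (h : HasSum f x) (hfg : ∀ j, g j = f j)
    (hxy : y = x) : HasSum g y := by
  rw [hxy, funext hfg]
  exact h

theorem hs_geo (r : ℂ) (hr : ‖r‖ < 1) : HasSum (fun j : ℕ => r ^ j) (1 / (1 - r)) := by
  simpa using hasSum_geometric_of_norm_lt_one hr

theorem hs_mul (r : ℂ) (hr : ‖r‖ < 1) :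
    HasSum (fun j : ℕ => (j : ℂ) * r ^ j) (r / (1 - r) ^ 2) :=
  hasSum_coe_mul_geometric_of_norm_lt_one hr

theorem hs_mul1 (r : ℂ) (hr : ‖r‖ < 1) :
    HasSum (fun j : ℕ => (j : ℂ) * r ^ (j - 1)) (1 / (1 - r) ^ 2) := by
  have h1 : 1 - r ≠ 0 := by
    intro h
    rw [← sub_eq_zero.mp h] at hr
    simp at hr
  have h := (hs_geo r hr).add (hs_mul r hr)
  rw [← hasSum_nat_add_iff' 1]
  refine hs_congr_s18 h ?_ ?_
  · intro j
    simp
    ring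
  · simp
    field_simp
    ring

theorem tsum0 (A : ℕ → ℂ) (b c p : ℂ) (h0 : A 0 = b) (hA : ∀ n, A (n + 1) = c * p ^ n)
    (hr : ‖conj p * p‖ < 1) :
    ∑' m : ℕ, ∑ k ∈ Finset.range (m + 1), conj (A m) * A k * A (m - k)
      = conj b * b ^ 2 + (2 * b * c * conj c * (1 / (1 - conj p * p))
        + conj c * c ^ 2 * conj p * (1 / (1 - conj p * p) ^ 2)) := by
  apply HasSum.tsum_eq
  rw [← hasSum_nat_add_iff' 1]
  refine hs_congr_s18 (((hs_geo _ hr).mul_left (2 * b * c * conj c)).add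
    ((hs_mul1 _ hr).mul_left (conj c * c ^ 2 * conj p))) ?_ ?_
  · intro j
    rw [inner_full A b c p h0 hA, hA]
    rcases j with _ | j
    · simp; ring
    · simp [mul_pow]; ring
  · simp [h0]; ring

theorem tsumP (A : ℕ → ℂ) (c p : ℂ) (hA : ∀ n, A (n + 1) = c * p ^ n)
    (hr : ‖conj p * p‖ < 1) (v : ℕ) :
    ∑' m : ℕ, ∑ k ∈ Finset.Icc 1 (v + 1 + m), conj (A (m + 1)) * A k * A (v + 1 + m + 1 - k)
      = conj c * c ^ 2 * p ^ v * (v + 1) * (1 / (1 - conj p * p))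
        + conj c * c ^ 2 * p ^ v * (conj p * p / (1 - conj p * p) ^ 2) := by
  apply HasSum.tsum_eq
  refine hs_congr_s18 (((hs_geo _ hr).mul_left (conj c * c ^ 2 * p ^ v * (v + 1))).add
    ((hs_mul _ hr).mul_left (conj c * c ^ 2 * p ^ v))) ?_ rfl
  intro j
  have e : v + 1 + j - 1 = v + j := by omega
  rw [inner_pos A c p hA, hA, e]
  simp [mul_pow]; ring

theorem tsumF (A : ℕ → ℂ) (b c p : ℂ) (h0 : A 0 = b) (hA : ∀ n, A (n + 1) = c * p ^ n)
    (hr : ‖conj p * p‖ < 1) (v : ℕ) :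
    ∑' m : ℕ, ∑ k ∈ Finset.range (v + 1 + m + 1), conj (A m) * A k * A (v + 1 + m - k)
      = conj b * (2 * b * c * p ^ v + v * c ^ 2 * p ^ (v - 1))
        + ((2 * b * c * conj c * p ^ (v + 1) + conj c * c ^ 2 * p ^ v * (v + 1))
            * (1 / (1 - conj p * p))
        + conj c * c ^ 2 * p ^ v * (conj p * p / (1 - conj p * p) ^ 2)) := by
  apply HasSum.tsum_eq
  rw [← hasSum_nat_add_iff' 1]
  refine hs_congr_s18 (((hs_geo _ hr).mul_left
      (2 * b * c * conj c * p ^ (v + 1) + conj c * c ^ 2 * p ^ v * (v + 1))).add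
    ((hs_mul _ hr).mul_left (conj c * c ^ 2 * p ^ v))) ?_ ?_
  · intro j
    have e : v + 1 + (j + 1) = (v + 1 + j) + 1 := by omega
    have e' : v + 1 + j - 1 = v + j := by omega
    rw [e, inner_full A b c p h0 hA, hA, e']
    simp [mul_pow]; ring
  · rw [Finset.sum_range_one, add_zero, inner_full A b c p h0 hA, h0]; ring

/-- If `p, b, a` solve the β-Szegő `L(1)` ODE system on an interval `I`, then the
sequence `α₀ = b`, `α_n = (bp+a)p^{n-1}` (`n ≥ 1`) solves the β-Szegő equation on `I`:
`i α₀' = Σ_{m≥0} Σ_{k=0}^m conj(α_m) α_k α_{m-k}` and, for `n ≥ 1`,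
`i α_n' = Σ_{m≥0} Σ_{k=0}^{n+m} conj(α_m) α_k α_{n+m-k}
  - β Σ_{m≥1} Σ_{k=1}^{n+m-1} conj(α_m) α_k α_{n+m-k}`
(the second sum being reindexed by `m ↦ m+1`). -/
theorem L1_ansatz_solves_beta_szego (β : ℝ) (I : Set ℝ) (hI : I.OrdConnected)
    (p b a : ℝ → ℂ)
    (hp : ∀ t ∈ I, DifferentiableAt ℝ p t)
    (hb : ∀ t ∈ I, DifferentiableAt ℝ b t)
    (ha : ∀ t ∈ I, DifferentiableAt ℝ a t)
    (hp1 : ∀ t ∈ I, ‖p t‖ < 1)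
    (hode : ∀ t ∈ I,
      Complex.I * deriv p t =
        ((Ntr p b a t - β * (1 - ‖p t‖ ^ 2) * Etr p b a t : ℝ) : ℂ) * p t
          + a t * conj (b t) ∧
      Complex.I * deriv b t =
        ((Ntr p b a t + Etr p b a t : ℝ) : ℂ) * b t
          + (Etr p b a t : ℂ) * a t * conj (p t) ∧
      Complex.I * deriv a t =
        ((Ntr p b a t - β * Etr p b a t : ℝ) : ℂ) * a t
          - ((β * Etr p b a t * ‖p t‖ ^ 2 : ℝ) : ℂ) * b t * p t)
    (α : ℕ → ℝ → ℂ)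
    (hα0 : ∀ t : ℝ, α 0 t = b t)
    (hαn : ∀ (n : ℕ) (t : ℝ), α (n + 1) t = (b t * p t + a t) * p t ^ n) :
    ∀ t ∈ I,
      (Complex.I * deriv (α 0) t =
        ∑' m : ℕ, ∑ k ∈ Finset.range (m + 1), conj (α m t) * α k t * α (m - k) t)
      ∧ ∀ n : ℕ, 1 ≤ n →
          Complex.I * deriv (α n) t =
            (∑' m : ℕ, ∑ k ∈ Finset.range (n + m + 1),
                conj (α m t) * α k t * α (n + m - k) t)
              - (β : ℂ) * ∑' m : ℕ, ∑ k ∈ Finset.Icc 1 (n + m),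
                  conj (α (m + 1) t) * α k t * α (n + m + 1 - k) t := by
  intro t ht
  obtain ⟨h1, h2, h3⟩ := hode t ht
  have hr : ‖conj (p t) * p t‖ < 1 := by
    have := hp1 t ht
    have h0 := norm_nonneg (p t)
    rw [norm_mul, Complex.norm_conj]
    nlinarith
  have hs : 1 - conj (p t) * p t ≠ 0 := by
    intro h
    rw [← sub_eq_zero.mp h] at hr
    simp at hr
  have nsq : ∀ z : ℂ, ((‖z‖ : ℝ) : ℂ) ^ 2 = conj z * z := fun z => (Complex.conj_mul' z).symm
  have hE : (Etr p b a t : ℂ) = conj (b t * p t + a t) * (b t * p t + a t)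
      / (1 - conj (p t) * p t) ^ 2 := by
    simp only [Etr]
    push_cast
    rw [nsq, nsq]
  have hN : (Ntr p b a t : ℂ) = conj (b t) * b t + (1 - conj (p t) * p t) * Etr p b a t := by
    simp only [Ntr]
    push_cast
    rw [nsq, nsq]
  push_cast at h1 h2 h3
  rw [hN, nsq, hE] at h1
  rw [hN, hE] at h2
  rw [hN, nsq, hE] at h3
  have ha0 : α 0 = b := funext hα0
  have hA := fun n => hαn n t
  refine ⟨?_, ?_⟩
  · rw [tsum0 (fun m => α m t) (b t) (b t * p t + a t) (p t) (hα0 t) hA hr, ha0, h2]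
    generalize conj (b t * p t + a t) = d
    field_simp
    ring
  · intro n hn
    obtain ⟨v, rfl⟩ : ∃ v, n = v + 1 := ⟨n - 1, by omega⟩
    rw [tsumF (fun m => α m t) (b t) (b t * p t + a t) (p t) (hα0 t) hA hr,
      tsumP (fun m => α m t) (b t * p t + a t) (p t) hA hr]
    have hav : α (v + 1) = fun t => (b t * p t + a t) * p t ^ v := funext (hαn v)
    have hd := ((((hb t ht).hasDerivAt.mul (hp t ht).hasDerivAt).add
      (ha t ht).hasDerivAt).mul ((hp t ht).hasDerivAt.pow v)).deriv
    have hd' : deriv (α (v + 1)) t = (deriv b t * p t + b t * deriv p t + deriv a t) * p t ^ v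
        + (b t * p t + a t) * (v * p t ^ (v - 1) * deriv p t) := by
      rw [hav]; exact hd
    have key : Complex.I * deriv (α (v + 1)) t
        = ((Complex.I * deriv b t) * p t + b t * (Complex.I * deriv p t)
          + Complex.I * deriv a t) * p t ^ v
        + (b t * p t + a t) * (v * p t ^ (v - 1) * (Complex.I * deriv p t)) := by
      rw [hd']; ring
    rw [key, h1, h2, h3]
    generalize conj (b t * p t + a t) = d
    generalize conj (p t) = q at *
    generalize conj (b t) = e
    rcases v with _ | v
    · simp
      field_simp
      ring
    · simp only [Nat.add_sub_cancel]
      field_simp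
      ring
end
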